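/- arXiv:1911.11016 — 2 statements merged into one kernel-verified Lean document; each statement's English description precedes it below -/
import Mathlib

section
/- For every t > 0, the lower limit of the sequence n ↦ |tC_n^eucl|_Rips satisfies liminf_{n→∞} |tC_n^eucl|_Rips = e^{−2t} + 2πt. -/
open scoped BigOperators Real

/-- The Rips magnitude function of a finite subset `A` of a metric space:
`|tA|_Rips = Σ_{∅ ≠ B ⊆ A} (−1)^{#B−1} e^{−diam(B)·t}`. -/
noncomputable def ripsMag {Y : Type*} [MetricSpace Y] (A : Finset Y) (t : ℝ) : ℝ :=
  ∑ B ∈ A.powerset.filter (fun B => B.Nonempty),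
    (-1 : ℝ) ^ (B.card - 1) * Real.exp (-(Metric.diam (B : Set Y)) * t)


/-- The Euclidean cycle `C_n^eucl`: `n` equally spaced points on the unit circle
in `ℝ² = ℂ`, with the Euclidean metric. -/
noncomputable def euclCycle (n : ℕ) : Finset ℂ :=
  (Finset.range n).image
    (fun k : ℕ => Complex.exp (2 * (π : ℂ) * (k : ℂ) / (n : ℂ) * Complex.I))

/-!
Every simplex of the `n`-cycle has diameter `r_k = 2 sin(πk/n)` for some `k ≤ n/2`, so summation by
parts turns the Rips magnitude into a combination of the Euler characteristics `χ_k` of the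
Vietoris–Rips complexes of the cycle, with the nonnegative weights `e^{-r_k t} - e^{-r_{k+1} t}`.
The scales `k = n/2` (a full simplex) and `k = 0` (`n` points) contribute
`e^{-r_{n/2} t} + n (1 - e^{-r_1 t})`, which tends to `e^{-2t} + 2πt`.

At an intermediate scale `k`, inclusion–exclusion and sign-reversing involutions show that only the
simplices stable under translation by `-k` contribute to `χ_k`. Each of them has an odd number of
points, so `χ_k ≥ 0`, and there are none if `k` is coprime to `n`, so `χ_k = 0` when `n` is prime.
-/

open Finset Filter Topology

section SignedSums

lemma sum_eq_zero_of_insert_mem_iff {α M : Type*} [DecidableEq α] [AddCommGroup M]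
    {F : Finset (Finset α)} {w : Finset α → M} (x : α)
    (hF : ∀ A, x ∉ A → (insert x A ∈ F ↔ A ∈ F))
    (hw : ∀ A ∈ F, x ∉ A → w (insert x A) = -w A) : ∑ A ∈ F, w A = 0 := by
  have hswap : ∑ A ∈ F with x ∈ A, w A = ∑ A ∈ F with x ∉ A, -w A := by
    refine sum_bij' (fun A _ ↦ A.erase x) (fun A _ ↦ insert x A) ?_ ?_ ?_ ?_ ?_
    · intro A hA
      obtain ⟨hAF, hxA⟩ := mem_filter.1 hA
      have : A.erase x ∈ F := by rwa [← hF _ (notMem_erase x A), insert_erase hxA]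
      simpa using this
    · intro A hA
      obtain ⟨hAF, hxA⟩ := mem_filter.1 hA
      simpa using (hF A hxA).2 hAF
    · exact fun A hA ↦ insert_erase (mem_filter.1 hA).2
    · exact fun A hA ↦ erase_insert (mem_filter.1 hA).2
    · intro A hA
      obtain ⟨hAF, hxA⟩ := mem_filter.1 hA
      have hmem : A.erase x ∈ F := by rwa [← hF _ (notMem_erase x A), insert_erase hxA]
      rw [← hw _ hmem (notMem_erase x A), insert_erase hxA]
  rw [← sum_filter_add_sum_filter_not F (x ∈ ·), hswap, sum_neg_distrib, neg_add_cancel]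

lemma sum_filter_eq_empty_eq_sum {ι α R : Type*} [DecidableEq α] [CommRing R]
    {s : Finset ι} {E : ι → Finset α} {w : ι → R}
    (h : ∀ U : Finset α, U.Nonempty → ∑ i ∈ s with U ⊆ E i, w i = 0) :
    ∑ i ∈ s with E i = ∅, w i = ∑ i ∈ s, w i := by
  let T := (s.biUnion E).powerset
  have hind : ∀ i ∈ s, (if E i = ∅ then w i else 0) =
      ∑ U ∈ T, if U ⊆ E i then (-1) ^ #U * w i else 0 := fun i hi ↦ by
    have hT : {U ∈ T | U ⊆ E i} = (E i).powerset := by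
      ext U
      simpa [T] using fun hU : U ⊆ E i ↦ hU.trans (subset_biUnion_of_mem E hi)
    have hsign := congrArg (Int.cast : ℤ → R) (sum_powerset_neg_one_pow_card (x := E i))
    push_cast at hsign
    simp [← sum_filter, hT, ← sum_mul, hsign]
  calc ∑ i ∈ s with E i = ∅, w i
      = ∑ i ∈ s, ∑ U ∈ T, if U ⊆ E i then (-1) ^ #U * w i else 0 := by
        rw [sum_filter, sum_congr rfl hind]
    _ = ∑ U ∈ T, (-1) ^ #U * ∑ i ∈ s with U ⊆ E i, w i := by
        rw [sum_comm]
        simp only [mul_sum, sum_filter, mul_ite, mul_zero]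
    _ = ∑ i ∈ s, w i := by
        rw [sum_eq_single ∅ (fun U _ hU ↦ by rw [h U (nonempty_iff_ne_empty.2 hU), mul_zero])
          (by simp [T])]
        simp

lemma sum_powerset_nonempty_neg_one_pow_card_sub_one {α : Type*} {s : Finset α}
    (hs : s.Nonempty) : ∑ A ∈ s.powerset with A.Nonempty, (-1 : ℤ) ^ (#A - 1) = 1 := by
  have hsign : ∑ A ∈ s.powerset with A.Nonempty, (-1 : ℤ) ^ (#A - 1) =
      -∑ A ∈ s.powerset with A.Nonempty, (-1 : ℤ) ^ #A := by
    rw [← sum_neg_distrib]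
    refine sum_congr rfl fun A hA ↦ ?_
    rw [← mul_pow_sub_one (mem_filter.1 hA).2.card_ne_zero]
    ring
  have hempty : ∑ A ∈ s.powerset with ¬A.Nonempty, (-1 : ℤ) ^ #A = 1 := by
    have : {A ∈ s.powerset | ¬A.Nonempty} = {∅} := by ext; simp +contextual
    simp [this]
  have htotal := sum_powerset_neg_one_pow_card_of_nonempty hs
  rw [← sum_filter_add_sum_filter_not _ (fun A : Finset α ↦ A.Nonempty)] at htotal
  linarith

lemma sum_mul_comp_eq_sum_sublevel {ι R : Type*} [CommRing R] (s : Finset ι) (w : ι → R)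
    (f : ℕ → R) {d : ι → ℕ} {m : ℕ} (hd : ∀ i ∈ s, d i ≤ m) :
    ∑ i ∈ s, w i * f (d i) =
      (∑ i ∈ s, w i) * f m +
        ∑ k ∈ range m, (f k - f (k + 1)) * ∑ i ∈ s with d i ≤ k, w i := by
  have htelescope : ∀ i ∈ s, f (d i) =
      f m + ∑ k ∈ range m, if d i ≤ k then f k - f (k + 1) else 0 := fun i hi ↦ by
    have hIco : {k ∈ range m | d i ≤ k} = Ico (d i) m := by ext; simp [and_comm]
    rw [← sum_filter, hIco, ← sub_eq_iff_eq_add', ← neg_sub, ← sum_Ico_sub f (hd i hi),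
      ← sum_neg_distrib]
    simp only [neg_sub]
  calc ∑ i ∈ s, w i * f (d i)
      = ∑ i ∈ s, (w i * f m +
          ∑ k ∈ range m, if d i ≤ k then (f k - f (k + 1)) * w i else 0) := by
        refine sum_congr rfl fun i hi ↦ ?_
        simp only [htelescope i hi, mul_add, mul_sum, mul_ite, mul_zero, mul_comm (w i) (_ - _)]
    _ = _ := by
        rw [sum_add_distrib, sum_mul, sum_comm]
        simp only [mul_sum, sum_filter, mul_ite, mul_zero]

end SignedSums

lemma add_mem_of_forall_sub_mem {G : Type*} [AddGroup G] {A : Finset G} {c : G}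
    (h : ∀ a ∈ A, a - c ∈ A) {a : G} (ha : a ∈ A) : a + c ∈ A := by
  obtain ⟨b, hb, hba⟩ := surjOn_of_injOn_of_card_le (· - c) h sub_left_injective.injOn le_rfl ha
  rwa [← hba, sub_add_cancel]

lemma eq_univ_of_forall_add_mem {n : ℕ} [NeZero n] {A : Finset (ZMod n)} (hA : A.Nonempty)
    {c : ZMod n} (hc : IsUnit c) (h : ∀ a ∈ A, a + c ∈ A) : A = univ := by
  obtain ⟨a, ha⟩ := hA
  obtain ⟨u, rfl⟩ := hc
  have hmul (m : ℕ) : a + m * u ∈ A := by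
    induction m with
    | zero => simpa using ha
    | succ m ih => simpa [add_mul, add_assoc] using h _ ih
  refine eq_univ_of_forall fun x ↦ ?_
  simpa using hmul ((x - a) * ↑u⁻¹).val

section CyclicDist

variable {n : ℕ}

/-- The graph distance between two points of the `n`-cycle `ℤ/n`. -/
def cyclicDist (x y : ZMod n) : ℕ := (x - y).valMinAbs.natAbs

lemma cyclicDist_self (x : ZMod n) : cyclicDist x x = 0 := by simp [cyclicDist]

lemma cyclicDist_comm (x y : ZMod n) : cyclicDist x y = cyclicDist y x := by
  rw [cyclicDist, ← neg_sub, ZMod.natAbs_valMinAbs_neg, cyclicDist]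

lemma cyclicDist_eq_zero {x y : ZMod n} : cyclicDist x y = 0 ↔ x = y := by
  rw [cyclicDist, Int.natAbs_eq_zero, ZMod.valMinAbs_eq_zero, sub_eq_zero]

lemma cyclicDist_le_half [NeZero n] (x y : ZMod n) : cyclicDist x y ≤ n / 2 :=
  ZMod.natAbs_valMinAbs_le _

lemma cyclicDist_add_natCast (x : ZMod n) {j : ℕ} (hj : j ≤ n / 2) :
    cyclicDist (x + (j : ZMod n)) x = j := by
  rw [cyclicDist, add_sub_cancel_left, ZMod.valMinAbs_natCast_of_le_half hj, Int.natAbs_natCast]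

lemma eq_sub_of_cyclicDist_le_of_lt [NeZero n] {k : ℕ} {x y : ZMod n} (h : cyclicDist x y ≤ k)
    (h' : k < cyclicDist (x + 1) y) : y = x - k := by
  have hle : cyclicDist (x + 1) y ≤ ((x - y).valMinAbs + 1).natAbs :=
    ZMod.natAbs_min_of_le_div_two n _ _ (by push_cast [ZMod.coe_valMinAbs]; ring)
      (cyclicDist_le_half _ _)
  have hk : (x - y).valMinAbs = k := by unfold cyclicDist at *; omega
  rw [← Int.cast_natCast, ← hk, ZMod.coe_valMinAbs, sub_sub_cancel]

/-- The diameter of a finite subset of the `n`-cycle for `cyclicDist`. -/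
def cyclicDiam (A : Finset (ZMod n)) : ℕ := (A ×ˢ A).sup fun p ↦ cyclicDist p.1 p.2

lemma cyclicDiam_le_iff {k : ℕ} {A : Finset (ZMod n)} :
    cyclicDiam A ≤ k ↔ ∀ x ∈ A, ∀ y ∈ A, cyclicDist x y ≤ k := by
  simp only [cyclicDiam, Finset.sup_le_iff, mem_product, and_imp, Prod.forall]
  exact ⟨fun h x hx y hy ↦ h x y hx hy, fun h x y hx hy ↦ h x hx y hy⟩

lemma cyclicDist_le_cyclicDiam {A : Finset (ZMod n)} {x y : ZMod n} (hx : x ∈ A) (hy : y ∈ A) :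
    cyclicDist x y ≤ cyclicDiam A :=
  cyclicDiam_le_iff.1 le_rfl x hx y hy

lemma exists_cyclicDist_eq_cyclicDiam {A : Finset (ZMod n)} (hA : A.Nonempty) :
    ∃ x ∈ A, ∃ y ∈ A, cyclicDist x y = cyclicDiam A := by
  obtain ⟨p, hp, h⟩ := exists_mem_eq_sup (A ×ˢ A) (hA.product hA) fun p ↦ cyclicDist p.1 p.2
  exact ⟨p.1, (mem_product.1 hp).1, p.2, (mem_product.1 hp).2, h.symm⟩

lemma cyclicDiam_le_half [NeZero n] (A : Finset (ZMod n)) : cyclicDiam A ≤ n / 2 :=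
  cyclicDiam_le_iff.2 fun x _ y _ ↦ cyclicDist_le_half x y

lemma cyclicDiam_mono {A B : Finset (ZMod n)} (h : A ⊆ B) : cyclicDiam A ≤ cyclicDiam B :=
  cyclicDiam_le_iff.2 fun _ hx _ hy ↦ cyclicDist_le_cyclicDiam (h hx) (h hy)

lemma cyclicDiam_insert_le {k : ℕ} {A : Finset (ZMod n)} {x : ZMod n} (hA : cyclicDiam A ≤ k)
    (hx : ∀ y ∈ A, cyclicDist x y ≤ k) : cyclicDiam (insert x A) ≤ k := by
  rw [cyclicDiam_le_iff] at hA ⊢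
  intro y hy z hz
  rw [mem_insert] at hy hz
  rcases hy with rfl | hy <;> rcases hz with rfl | hz
  · simp [cyclicDist_self]
  · exact hx z hz
  · rw [cyclicDist_comm]
    exact hx y hy
  · exact hA y hy z hz

lemma cyclicDiam_eq_zero_iff {A : Finset (ZMod n)} :
    cyclicDiam A = 0 ↔ (A : Set (ZMod n)).Subsingleton := by
  simp only [← Nat.le_zero, cyclicDiam_le_iff, Set.Subsingleton, mem_coe]
  simp only [Nat.le_zero, cyclicDist_eq_zero]

lemma add_natCast_succ_notMem {k : ℕ} (hk : k < n / 2) {A : Finset (ZMod n)}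
    (hA : cyclicDiam A ≤ k) {x : ZMod n} (hx : x ∈ A) : x + ((k + 1 : ℕ) : ZMod n) ∉ A := fun h ↦ by
  have := (cyclicDist_le_cyclicDiam h hx).trans hA
  rw [cyclicDist_add_natCast x hk] at this
  omega

end CyclicDist

section ExtendablePoints

variable {n k : ℕ} {A : Finset (ZMod n)}

/-- The points of `A` whose translate by `-k` is not in `A`. If `A` has diameter at most `k`, these
are the points whose successor can be added to `A` without making the diameter exceed `k`. -/
def extendablePoints (k : ℕ) (A : Finset (ZMod n)) : Finset (ZMod n) := {a ∈ A | a - k ∉ A}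

lemma mem_extendablePoints {a : ZMod n} : a ∈ extendablePoints k A ↔ a ∈ A ∧ a - k ∉ A :=
  mem_filter

lemma extendablePoints_eq_empty_iff : extendablePoints k A = ∅ ↔ ∀ a ∈ A, a - k ∈ A := by
  simp [extendablePoints, filter_eq_empty_iff]

lemma extendablePoints_ne_univ [NeZero n] : extendablePoints k A ≠ univ := fun h ↦ by
  have hmem (a : ZMod n) : a ∈ A ∧ a - k ∉ A := by simp [← mem_extendablePoints, h]
  exact (hmem 0).2 (hmem _).1

lemma cyclicDiam_insert_add_one_le [NeZero n] (hA : cyclicDiam A ≤ k) {u : ZMod n}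
    (hu : u ∈ extendablePoints k A) : cyclicDiam (insert (u + 1) A) ≤ k := by
  obtain ⟨huA, hu_sub⟩ := mem_extendablePoints.1 hu
  refine cyclicDiam_insert_le hA fun y hy ↦ ?_
  by_contra! hfar
  have hy_eq := eq_sub_of_cyclicDist_le_of_lt ((cyclicDist_le_cyclicDiam huA hy).trans hA) hfar
  exact hu_sub (hy_eq ▸ hy)

lemma cyclicDiam_le_and_subset_extendablePoints_insert_iff [NeZero n] (hk : k < n / 2)
    {U : Finset (ZMod n)} {u : ZMod n} (hu : u ∈ U) (hu' : u + 1 ∉ U) :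
    cyclicDiam (insert (u + 1) A) ≤ k ∧ U ⊆ extendablePoints k (insert (u + 1) A) ↔
      cyclicDiam A ≤ k ∧ U ⊆ extendablePoints k A := by
  have hne {v : ZMod n} (hv : v ∈ U) : v ≠ u + 1 := fun h ↦ hu' (h ▸ hv)
  constructor
  · rintro ⟨hdiam, hU⟩
    refine ⟨(cyclicDiam_mono (subset_insert _ _)).trans hdiam, fun v hv ↦ ?_⟩
    obtain ⟨hvA, hv_sub⟩ := mem_extendablePoints.1 (hU hv)
    exact mem_extendablePoints.2
      ⟨mem_of_mem_insert_of_ne hvA (hne hv), fun h ↦ hv_sub (mem_insert_of_mem h)⟩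
  · rintro ⟨hdiam, hU⟩
    refine ⟨cyclicDiam_insert_add_one_le hdiam (hU hu), fun v hv ↦ ?_⟩
    obtain ⟨hvA, hv_sub⟩ := mem_extendablePoints.1 (hU hv)
    refine mem_extendablePoints.2 ⟨mem_insert_of_mem hvA, fun h ↦ ?_⟩
    have hv_eq : v = u + (k + 1 : ℕ) := by
      have := (mem_insert.1 h).resolve_right hv_sub
      push_cast
      linear_combination this
    exact add_natCast_succ_notMem hk hdiam (mem_extendablePoints.1 (hU hu)).1 (hv_eq ▸ hvA)

lemma odd_card_of_add_mem_of_sub_mem {I : Finset ℤ} (hI : ∀ i ∈ I, |i| ≤ k) (hkI : (k : ℤ) ∈ I)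
    (hadd : ∀ i ∈ I, i < 0 → i + k ∈ I) (hsub : ∀ i ∈ I, 0 ≤ i → i - k ∈ I) : Odd #I := by
  have hcard : #{i ∈ I.erase k | i < 0} = #{i ∈ I.erase k | ¬i < 0} := by
    refine card_bij' (fun i _ ↦ i + k) (fun i _ ↦ i - k) ?_ ?_ (by simp) (by simp)
    · simp only [mem_filter, mem_erase]
      rintro i ⟨⟨-, hiI⟩, hneg⟩
      have := abs_le.1 (hI i hiI)
      exact ⟨⟨by omega, hadd i hiI hneg⟩, by omega⟩
    · simp only [mem_filter, mem_erase]
      rintro i ⟨⟨hne, hiI⟩, hnonneg⟩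
      have := abs_le.1 (hI i hiI)
      exact ⟨⟨by omega, hsub i hiI (by omega)⟩, by omega⟩
  rw [← card_erase_add_one hkI, ← card_filter_add_card_filter_not (· < 0), ← hcard]
  exact ⟨_, by ring⟩

/-- Measured from one of its points, `A` is a subset of the integer interval `[-k, k]`, to which
`odd_card_of_add_mem_of_sub_mem` applies. -/
lemma odd_card_of_extendablePoints_eq_empty [NeZero n] (hk : k < n / 2) (hA : A.Nonempty)
    (hdiam : cyclicDiam A ≤ k) (hE : extendablePoints k A = ∅) : Odd #A := by
  have hsub := extendablePoints_eq_empty_iff.1 hE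
  obtain ⟨a, ha⟩ := hA
  let pos (x : ZMod n) : ℤ := (x - a).valMinAbs
  have abs_pos_le {x : ZMod n} (hx : x ∈ A) : |pos x| ≤ k := by
    have := (cyclicDist_le_cyclicDiam hx ha).trans hdiam
    rwa [Int.abs_eq_natAbs, Nat.cast_le]
  have add_pos (x : ZMod n) : a + pos x = x := by simp [pos]
  have pos_eq {x : ZMod n} {j : ℤ} (hx : a + j = x) (hj : |j| ≤ k) : pos x = j := by
    refine (ZMod.valMinAbs_spec _ _).2 ⟨by rw [← hx, add_sub_cancel_left], ?_⟩
    rw [abs_le] at hj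
    constructor <;> omega
  have pos_injective : Function.Injective pos :=
    Function.LeftInverse.injective (g := fun j : ℤ ↦ a + (j : ZMod n)) add_pos
  rw [← card_image_of_injective A pos_injective]
  refine odd_card_of_add_mem_of_sub_mem (k := k) (forall_mem_image.2 fun x ↦ abs_pos_le) ?_
    (forall_mem_image.2 fun x hx hneg ↦ ?_) (forall_mem_image.2 fun x hx hnonneg ↦ ?_)
  · exact mem_image.2 ⟨a + k, add_mem_of_forall_sub_mem hsub ha, pos_eq (by simp) (by simp)⟩
  · have := abs_le.1 (abs_pos_le hx)
    refine mem_image.2 ⟨x + k, add_mem_of_forall_sub_mem hsub hx, pos_eq ?_ (abs_le.2 (by omega))⟩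
    push_cast
    rw [← add_assoc, add_pos]
  · have := abs_le.1 (abs_pos_le hx)
    refine mem_image.2 ⟨x - k, hsub x hx, pos_eq ?_ (abs_le.2 (by omega))⟩
    push_cast
    rw [← add_sub_assoc, add_pos]

lemma extendablePoints_nonempty_of_coprime [NeZero n] (hk : k < n / 2)
    (hkn : k.Coprime n) (hA : A.Nonempty) (hdiam : cyclicDiam A ≤ k) :
    (extendablePoints k A).Nonempty := by
  by_contra! hE
  have huniv : A = univ := by
    refine eq_univ_of_forall_add_mem hA ((ZMod.isUnit_iff_coprime k n).2 hkn).neg fun a ha ↦ ?_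
    rw [← sub_eq_add_neg]
    exact extendablePoints_eq_empty_iff.1 hE a ha
  obtain ⟨a, ha⟩ := hA
  exact add_natCast_succ_notMem hk hdiam ha (huniv ▸ mem_univ _)

end ExtendablePoints

section EulerCharacteristic

variable {n k : ℕ} [NeZero n]

/-- The simplices of the Vietoris–Rips complex at scale `k` of the `n`-cycle with `cyclicDist`. -/
def ripsSimplices (n k : ℕ) [NeZero n] : Finset (Finset (ZMod n)) :=
  {A | A.Nonempty ∧ cyclicDiam A ≤ k}

lemma mem_ripsSimplices {A : Finset (ZMod n)} :
    A ∈ ripsSimplices n k ↔ A.Nonempty ∧ cyclicDiam A ≤ k := by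
  simp [ripsSimplices]

/-- The Euler characteristic of the Vietoris–Rips complex at scale `k` of the `n`-cycle with
`cyclicDist`. -/
def ripsEuler (n k : ℕ) [NeZero n] : ℤ := ∑ A ∈ ripsSimplices n k, (-1) ^ (#A - 1)

lemma ripsEuler_zero : ripsEuler n 0 = n := by
  have hsingletons : ripsSimplices n 0 = powersetCard 1 univ := by
    ext A
    rw [mem_ripsSimplices, Nat.le_zero, cyclicDiam_eq_zero_iff, mem_powersetCard_univ,
      card_eq_one, ← coe_nonempty, ← Set.exists_eq_singleton_iff_nonempty_subsingleton]
    simp only [coe_eq_singleton]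
  rw [ripsEuler, hsingletons, sum_congr rfl fun A hA ↦ by rw [(mem_powersetCard.1 hA).2]]
  simp [ZMod.card]

lemma ripsEuler_half : ripsEuler n (n / 2) = 1 := by
  have hall : ripsSimplices n (n / 2) = {A ∈ (univ : Finset (ZMod n)).powerset | A.Nonempty} := by
    ext A
    simp [mem_ripsSimplices, cyclicDiam_le_half]
  rw [ripsEuler, hall, sum_powerset_nonempty_neg_one_pow_card_sub_one univ_nonempty]

/-- If `u ∈ U` and `u + 1 ∉ U`, then adding or removing the point `u + 1` is a sign-reversing
involution of the simplices `A` with `U ⊆ extendablePoints k A`. -/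
lemma sum_ripsSimplices_filter_subset_extendablePoints (hk : k < n / 2) {U : Finset (ZMod n)}
    (hU : U.Nonempty) :
    ∑ A ∈ ripsSimplices n k with U ⊆ extendablePoints k A, (-1 : ℤ) ^ (#A - 1) = 0 := by
  obtain rfl | hU_univ := eq_or_ne U univ
  · simp [univ_subset_iff, extendablePoints_ne_univ]
  obtain ⟨u, hu, hu'⟩ : ∃ u ∈ U, u + 1 ∉ U := by
    by_contra! h
    exact hU_univ (eq_univ_of_forall_add_mem hU isUnit_one h)
  refine sum_eq_zero_of_insert_mem_iff (u + 1) (fun A _ ↦ ?_) fun A hA hnot ↦ ?_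
  · have hmem (B : Finset (ZMod n)) : B ∈ {A ∈ ripsSimplices n k | U ⊆ extendablePoints k A} ↔
        cyclicDiam B ≤ k ∧ U ⊆ extendablePoints k B := by
      rw [mem_filter, mem_ripsSimplices, and_assoc, and_iff_right_of_imp]
      exact fun h ↦ ⟨u, (mem_extendablePoints.1 (h.2 hu)).1⟩
    rw [hmem, hmem, cyclicDiam_le_and_subset_extendablePoints_insert_iff hk hu hu']
  · have hne : #A ≠ 0 := (mem_ripsSimplices.1 (mem_filter.1 hA).1).1.card_ne_zero
    rw [card_insert_of_notMem hnot, add_tsub_cancel_right, ← mul_pow_sub_one hne, neg_one_mul]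

lemma ripsEuler_eq_sum_extendablePoints_eq_empty (hk : k < n / 2) :
    ripsEuler n k = ∑ A ∈ ripsSimplices n k with extendablePoints k A = ∅, (-1) ^ (#A - 1) :=
  (sum_filter_eq_empty_eq_sum fun _ ↦
    sum_ripsSimplices_filter_subset_extendablePoints hk).symm

lemma ripsEuler_nonneg (hk : k < n / 2) : 0 ≤ ripsEuler n k := by
  rw [ripsEuler_eq_sum_extendablePoints_eq_empty hk]
  refine sum_nonneg fun A hA ↦ ?_
  obtain ⟨hA, hE⟩ := mem_filter.1 hA
  obtain ⟨hne, hdiam⟩ := mem_ripsSimplices.1 hA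
  exact ((odd_card_of_extendablePoints_eq_empty hk hne hdiam hE).tsub_odd odd_one).pow_nonneg _

lemma ripsEuler_eq_zero_of_coprime (hk : k < n / 2) (hkn : k.Coprime n) : ripsEuler n k = 0 := by
  rw [ripsEuler_eq_sum_extendablePoints_eq_empty hk]
  refine sum_eq_zero fun A hA ↦ ?_
  obtain ⟨hA, hE⟩ := mem_filter.1 hA
  obtain ⟨hne, hdiam⟩ := mem_ripsSimplices.1 hA
  exact absurd hE (extendablePoints_nonempty_of_coprime hk hkn hne hdiam).ne_empty

end EulerCharacteristic

section ChordLength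

variable {n : ℕ}

/-- The Euclidean distance between two points of the `n`-cycle that are `k` steps apart. -/
noncomputable def chordLength (n k : ℕ) : ℝ := 2 * Real.sin (π * k / n)

lemma chordLength_zero (n : ℕ) : chordLength n 0 = 0 := by simp [chordLength]

variable [NeZero n]

lemma chordLength_monotoneOn : MonotoneOn (chordLength n) (Set.Iic (n / 2)) := by
  intro i _ j hj hij
  have hn : (0 : ℝ) < n := Nat.cast_pos.2 (NeZero.pos n)
  have hj' : (j : ℝ) ≤ n / 2 := (Nat.cast_le.2 (Set.mem_Iic.1 hj)).trans Nat.cast_div_le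
  have hhalf : π * j / n ≤ π / 2 := by
    rw [div_le_iff₀ hn]
    nlinarith [Real.pi_pos]
  have hnonneg : 0 ≤ π * i / n := by positivity
  unfold chordLength
  gcongr
  exact Real.sin_le_sin_of_le_of_le_pi_div_two (by linarith [Real.pi_pos]) hhalf (by gcongr)

lemma chordLength_nonneg {k : ℕ} (hk : k ≤ n / 2) : 0 ≤ chordLength n k :=
  chordLength_zero n ▸ chordLength_monotoneOn (Set.mem_Iic.2 (Nat.zero_le _)) hk (Nat.zero_le k)

lemma dist_stdAddChar (x y : ZMod n) :
    dist (ZMod.stdAddChar x) (ZMod.stdAddChar y) = chordLength n (cyclicDist x y) := by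
  let j := (x - y).valMinAbs
  have hx : x = j + y := by simp [j]
  have hj : ZMod.stdAddChar (j : ZMod n) =
      Complex.exp (Complex.I * ((2 * (π * j / n) : ℝ) : ℂ)) := by
    rw [ZMod.stdAddChar_coe]
    congr 1
    push_cast
    ring
  have hdist : dist (ZMod.stdAddChar x) (ZMod.stdAddChar y) = |2 * Real.sin (π * j / n)| := by
    have hy : ‖ZMod.stdAddChar y‖ = 1 := AddChar.norm_apply _ _
    rw [dist_eq_norm, hx, AddChar.map_add_eq_mul, ← sub_one_mul, norm_mul, hy, mul_one, hj,
      Complex.norm_exp_I_mul_ofReal_sub_one, mul_div_cancel_left₀ _ two_ne_zero, Real.norm_eq_abs]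
  have hnonneg := chordLength_nonneg (cyclicDist_le_half x y)
  rw [hdist, ← abs_of_nonneg hnonneg, chordLength, cyclicDist, Nat.cast_natAbs, Int.cast_abs]
  obtain h | h := abs_choice (j : ℝ) <;> simp [j, h, neg_div]

lemma diam_image_stdAddChar {A : Finset (ZMod n)} (hA : A.Nonempty) :
    Metric.diam (ZMod.stdAddChar '' (A : Set (ZMod n))) = chordLength n (cyclicDiam A) := by
  apply le_antisymm
  · refine Metric.diam_le_of_forall_dist_le (chordLength_nonneg (cyclicDiam_le_half A)) ?_
    rintro _ ⟨x, hx, rfl⟩ _ ⟨y, hy, rfl⟩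
    rw [dist_stdAddChar]
    exact chordLength_monotoneOn (cyclicDist_le_half x y) (cyclicDiam_le_half A)
      (cyclicDist_le_cyclicDiam hx hy)
  · obtain ⟨x, hx, y, hy, hxy⟩ := exists_cyclicDist_eq_cyclicDiam hA
    rw [← hxy, ← dist_stdAddChar]
    exact Metric.dist_le_diam_of_mem (A.finite_toSet.image _).isBounded
      (Set.mem_image_of_mem _ hx) (Set.mem_image_of_mem _ hy)

end ChordLength

section RipsMagnitude

lemma ripsMag_image {X Y : Type*} [DecidableEq Y] [MetricSpace Y] {f : X → Y}
    (hf : Function.Injective f) (s : Finset X) (t : ℝ) :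
    ripsMag (s.image f) t = ∑ A ∈ s.powerset with A.Nonempty,
      (-1 : ℝ) ^ (#A - 1) * Real.exp (-Metric.diam (f '' A) * t) := by
  rw [ripsMag, powerset_image, filter_image, sum_image (image_injective hf).injOn]
  simp [card_image_of_injective _ hf]

variable {n : ℕ}

lemma euclCycle_eq_image (n : ℕ) [NeZero n] :
    euclCycle n = univ.image (ZMod.stdAddChar : ZMod n → ℂ) := by
  have hexp (k : ℕ) : Complex.exp (2 * (π : ℂ) * (k : ℂ) / (n : ℂ) * Complex.I) =
      ZMod.stdAddChar (k : ZMod n) := by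
    rw [← Int.cast_natCast (R := ZMod n) k, ZMod.stdAddChar_coe]
    congr 1
    push_cast
    ring
  ext z
  simp only [euclCycle, hexp, mem_image, mem_range, mem_univ, true_and]
  exact ⟨fun ⟨k, _, hk⟩ ↦ ⟨k, hk⟩, fun ⟨x, hx⟩ ↦ ⟨x.val, x.val_lt, by simpa using hx⟩⟩

/-- The contribution `e^{-rt}` to the Rips magnitude of the `n`-cycle of a simplex whose points
are at most `k` steps apart, where `r` is its diameter. -/
noncomputable def expChord (t : ℝ) (n k : ℕ) : ℝ := Real.exp (-chordLength n k * t)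

lemma expChord_zero (t : ℝ) (n : ℕ) : expChord t n 0 = 1 := by
  simp [expChord, chordLength_zero]

lemma expChord_succ_le {t : ℝ} (ht : 0 ≤ t) {k : ℕ} (hk : k < n / 2) :
    expChord t n (k + 1) ≤ expChord t n k := by
  have : NeZero n := ⟨by omega⟩
  have := chordLength_monotoneOn (Set.mem_Iic.2 hk.le) (Set.mem_Iic.2 hk) k.le_succ
  unfold expChord
  gcongr

lemma ripsMag_euclCycle_eq_sum_ripsEuler [NeZero n] (t : ℝ) :
    ripsMag (euclCycle n) t = expChord t n (n / 2) +
      ∑ k ∈ range (n / 2), (expChord t n k - expChord t n (k + 1)) * ripsEuler n k := by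
  have heuler (k : ℕ) : (ripsEuler n k : ℝ) =
      ∑ A ∈ ripsSimplices n (n / 2) with cyclicDiam A ≤ k, (-1) ^ (#A - 1) := by
    have : {A ∈ ripsSimplices n (n / 2) | cyclicDiam A ≤ k} = ripsSimplices n k := by
      ext A
      simp [mem_ripsSimplices, cyclicDiam_le_half]
    rw [this, ripsEuler]
    push_cast
    rfl
  have hmag : ripsMag (euclCycle n) t =
      ∑ A ∈ ripsSimplices n (n / 2), (-1) ^ (#A - 1) * expChord t n (cyclicDiam A) := by
    rw [euclCycle_eq_image, ripsMag_image ZMod.injective_stdAddChar]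
    refine sum_congr (by ext A; simp [mem_ripsSimplices, cyclicDiam_le_half]) fun A hA ↦ ?_
    rw [diam_image_stdAddChar (mem_ripsSimplices.1 hA).1, expChord]
  have htotal : ∑ A ∈ ripsSimplices n (n / 2), (-1 : ℝ) ^ (#A - 1) = 1 := by
    exact_mod_cast ripsEuler_half (n := n)
  rw [hmag, sum_mul_comp_eq_sum_sublevel _ _ _ fun A _ ↦ cyclicDiam_le_half A, htotal, one_mul]
  simp only [heuler]

/-- The part of the Rips magnitude of the `n`-cycle due to the scales `n / 2` and `0`, where the
Rips complex is a simplex and a set of `n` points respectively. -/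
noncomputable def extremalRipsMag (t : ℝ) (n : ℕ) : ℝ :=
  expChord t n (n / 2) + n * (1 - expChord t n 1)

lemma ripsMag_euclCycle_eq_extremalRipsMag_add [NeZero n] (hn : 2 ≤ n) (t : ℝ) :
    ripsMag (euclCycle n) t = extremalRipsMag t n +
      ∑ k ∈ Ico 1 (n / 2), (expChord t n k - expChord t n (k + 1)) * ripsEuler n k := by
  rw [ripsMag_euclCycle_eq_sum_ripsEuler, range_eq_Ico,
    sum_eq_sum_Ico_succ_bot (Nat.div_pos hn two_pos), ripsEuler_zero, expChord_zero,
    extremalRipsMag]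
  push_cast
  ring

lemma extremalRipsMag_le_ripsMag_euclCycle (hn : 2 ≤ n) {t : ℝ} (ht : 0 ≤ t) :
    extremalRipsMag t n ≤ ripsMag (euclCycle n) t := by
  have : NeZero n := ⟨by omega⟩
  rw [ripsMag_euclCycle_eq_extremalRipsMag_add hn, le_add_iff_nonneg_right]
  refine sum_nonneg fun k hk ↦ mul_nonneg ?_ ?_
  · exact sub_nonneg.2 (expChord_succ_le ht (mem_Ico.1 hk).2)
  · exact_mod_cast ripsEuler_nonneg (mem_Ico.1 hk).2

lemma ripsMag_euclCycle_eq_extremalRipsMag_of_prime {p : ℕ} (hp : p.Prime) (t : ℝ) :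
    ripsMag (euclCycle p) t = extremalRipsMag t p := by
  have : NeZero p := ⟨hp.ne_zero⟩
  rw [ripsMag_euclCycle_eq_extremalRipsMag_add hp.two_le, add_eq_left]
  refine sum_eq_zero fun k hk ↦ ?_
  obtain ⟨hk_pos, hk⟩ := mem_Ico.1 hk
  have hcoprime : k.Coprime p := (Nat.coprime_of_lt_prime (by omega) (by omega) hp).symm
  rw [ripsEuler_eq_zero_of_coprime hk hcoprime, Int.cast_zero, mul_zero]

end RipsMagnitude

section Limits

lemma tendsto_natCast_mul_sub_of_hasDerivAt_zero {f : ℝ → ℝ} {f' : ℝ} (hf : HasDerivAt f f' 0) :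
    Tendsto (fun n : ℕ ↦ n * (f (1 / n) - f 0)) atTop (𝓝 f') := by
  have hinv : Tendsto (fun n : ℕ ↦ (n : ℝ)⁻¹) atTop (𝓝[≠] 0) := by
    refine tendsto_nhdsWithin_iff.2 ⟨tendsto_inv_atTop_nhds_zero_nat, ?_⟩
    filter_upwards [eventually_ne_atTop 0] with n hn
    simpa using hn
  simpa [Function.comp_def] using hf.tendsto_slope_zero.comp hinv

lemma tendsto_nat_half_div_atTop :
    Tendsto (fun n : ℕ ↦ ((n / 2 : ℕ) : ℝ) / n) atTop (𝓝 (1 / 2)) := by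
  have h := (tendsto_nat_floor_mul_div_atTop (R := ℝ) (a := 1 / 2) (by norm_num)).comp
    tendsto_natCast_atTop_atTop
  refine h.congr fun n ↦ ?_
  rw [Function.comp_apply, one_div_mul_eq_div, ← Nat.floor_div_eq_div (K := ℝ), Nat.cast_ofNat]

lemma tendsto_expChord_half (t : ℝ) :
    Tendsto (fun n ↦ expChord t n (n / 2)) atTop (𝓝 (Real.exp (-2 * t))) := by
  have hcont : Continuous fun x : ℝ ↦ Real.exp (-(2 * Real.sin (π * x)) * t) := by fun_prop
  have h := (hcont.tendsto (1 / 2)).comp tendsto_nat_half_div_atTop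
  simpa [Function.comp_def, expChord, chordLength, mul_div_assoc, ← div_eq_mul_inv] using h

lemma tendsto_natCast_mul_one_sub_expChord_one (t : ℝ) :
    Tendsto (fun n ↦ n * (1 - expChord t n 1)) atTop (𝓝 (2 * π * t)) := by
  have hderiv : HasDerivAt (fun x : ℝ ↦ 1 - Real.exp (-(2 * Real.sin (π * x)) * t))
      (2 * π * t) 0 := by
    have hlin : HasDerivAt (fun x : ℝ ↦ π * x) π 0 := hasDerivAt_const_mul π
    refine ((hlin.sin.const_mul 2).fun_neg.mul_const t).exp.const_sub 1 |>.congr_deriv ?_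
    simp
  simpa [expChord, chordLength, div_eq_mul_inv] using
    tendsto_natCast_mul_sub_of_hasDerivAt_zero hderiv

lemma tendsto_extremalRipsMag (t : ℝ) :
    Tendsto (extremalRipsMag t) atTop (𝓝 (Real.exp (-2 * t) + 2 * π * t)) :=
  (tendsto_expChord_half t).add (tendsto_natCast_mul_one_sub_expChord_one t)

lemma liminf_eq_of_eventually_le_of_frequently_eq {ι β : Type*}
    [ConditionallyCompleteLinearOrder β] [TopologicalSpace β] [OrderTopology β] {l : Filter ι}
    {f g : ι → β} {b : β} (hg : Tendsto g l (𝓝 b)) (hle : ∀ᶠ i in l, g i ≤ f i)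
    (heq : ∃ᶠ i in l, f i = g i) : liminf f l = b := by
  let l' := l ⊓ 𝓟 {i | f i = g i}
  have : l'.NeBot := frequently_mem_iff_neBot.1 heq
  have : l.NeBot := .mono this inf_le_left
  have hf' : Tendsto f l' (𝓝 b) := (hg.mono_left inf_le_left).congr' <|
    mem_inf_of_right fun i (hi : f i = g i) ↦ hi.symm
  have hbdd : l.IsBoundedUnder (· ≥ ·) f := hg.isBoundedUnder_ge.mono_ge hle
  have hcobdd : l.IsCoboundedUnder (· ≥ ·) f :=
    hf'.isCoboundedUnder_ge.mono (map_mono inf_le_left)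
  apply le_antisymm
  · exact (liminf_le_liminf_of_le inf_le_left hbdd hf'.isCoboundedUnder_ge).trans_eq hf'.liminf_eq
  · exact hg.liminf_eq.symm.trans_le (liminf_le_liminf hle hg.isBoundedUnder_ge hcobdd)

end Limits

/-- for every `t > 0`,
`liminf_{n→∞} |tC_n^eucl|_Rips = e^{−2t} + 2πt`. -/
theorem ripsMag_euclCycle_liminf (t : ℝ) (ht : 0 < t) :
    Filter.liminf (fun n : ℕ => ripsMag (euclCycle n) t) Filter.atTop =
      Real.exp (-2 * t) + 2 * π * t := by
  have hbound : ∀ᶠ n in atTop, extremalRipsMag t n ≤ ripsMag (euclCycle n) t := by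
    filter_upwards [eventually_ge_atTop 2] with n hn
    exact extremalRipsMag_le_ripsMag_euclCycle hn ht.le
  have hprime : ∃ᶠ n in atTop, ripsMag (euclCycle n) t = extremalRipsMag t n :=
    (Nat.frequently_atTop_iff_infinite.2 Nat.infinite_setOfPred_prime).mono fun p hp ↦
      ripsMag_euclCycle_eq_extremalRipsMag_of_prime hp t
  exact liminf_eq_of_eventually_le_of_frequently_eq (tendsto_extremalRipsMag t) hbound hprime
end

section
/- For every t > 0, the series Σ_{r odd} (1/r)·e^{−2t·cos(π/(2r))}·sin(π/(2r)), taken over all odd positive integers r, converges absolutely (its r-th term is bounded above by π/(2r²)), and the upper limit of the sequence n ↦ |tC_n^eucl|_Rips satisfies limsup_{n→∞} |tC_n^eucl|_Rips = e^{−2t} + 2πt·Σ_{r odd} (1/r)·e^{−2t·cos(π/(2r))}·sin(π/(2r)). -/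
open scoped BigOperators Real

/-- The `r`-th term `(1/r) e^{−2t cos(π/(2r))} sin(π/(2r))` of the limsup series. -/
noncomputable def euclSeriesTerm (t : ℝ) (r : ℕ) : ℝ :=
  (1 / (r : ℝ)) * Real.exp (-2 * t * Real.cos (π / (2 * (r : ℝ)))) *
    Real.sin (π / (2 * (r : ℝ)))

/-!
Cut open at a vertex, the cycle graph on `2 * k + m` vertices becomes a part of a poset with two
strands, and the cliques of its `k`-th power become the chains whose endpoints satisfy one
inequality. By Philip Hall's theorem the Euler characteristic of the clique complex is a sum of
values of the Möbius function, which telescopes to `m` if `m ∣ k` and to `0` otherwise. Summing by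
parts over the diameters of the subsets, the Rips magnitude of `C_n^eucl` is `e^{-diam · t}` plus
one nonnegative term for every odd proper divisor `r` of `n`. For fixed `r` this term tends to the
`r`-th term of the series as `n` grows, and it is `O(1 / r ^ 2)` uniformly in `n`. So the upper
limit is at most what one gets by letting every odd `r < n` contribute, and it is attained along
`n = i !`, which every odd `r ≤ i` divides.
-/

section MobiusFunction

open Finset IncidenceAlgebra

variable {α : Type*} [PartialOrder α]

open Classical in
/-- The chains contained in a finite subset `S` of a poset, the empty one included. -/
noncomputable def chainsIn (S : Finset α) : Finset (Finset α) :=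
  {A ∈ S.powerset | IsChain (· ≤ ·) (A : Set α)}

theorem mem_chainsIn {S A : Finset α} :
    A ∈ chainsIn S ↔ A ⊆ S ∧ IsChain (· ≤ ·) (A : Set α) := by
  simp [chainsIn]

theorem exists_isLeast_of_isChain {A : Finset α} (hA : IsChain (· ≤ ·) (A : Set α))
    (hne : A.Nonempty) : ∃ v, IsLeast (A : Set α) v :=
  have hA' : IsChain (fun x y => y ≤ x) (A : Set α) := hA.symm
  (A.exists_minimal hne).imp fun _ => hA'.directedOn.minimal_iff_isLeast.1

theorem exists_isGreatest_of_isChain {A : Finset α} (hA : IsChain (· ≤ ·) (A : Set α))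
    (hne : A.Nonempty) : ∃ w, IsGreatest (A : Set α) w :=
  (A.exists_maximal hne).imp fun _ => hA.directedOn.maximal_iff_isGreatest.1

variable [LocallyFiniteOrder α]

open Classical in
/-- The chains of a locally finite poset with least element `v` and greatest element `w`. -/
noncomputable def chainsBetween (v w : α) : Finset (Finset α) :=
  {A ∈ chainsIn (Icc v w) | v ∈ A ∧ w ∈ A}

theorem mem_chainsBetween {v w : α} {A : Finset α} :
    A ∈ chainsBetween v w ↔
      IsLeast (A : Set α) v ∧ IsGreatest (A : Set α) w ∧ IsChain (· ≤ ·) (A : Set α) := by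
  simp only [chainsBetween, mem_filter, mem_chainsIn, subset_iff, mem_Icc, IsLeast, IsGreatest,
    mem_lowerBounds, mem_upperBounds, mem_coe]
  grind

variable [DecidableEq α]

theorem sum_Icc_sum_chainsBetween {M : Type*} [AddCommMonoid M] (v w : α) (f : Finset α → M) :
    ∑ x ∈ Icc v w, ∑ A ∈ chainsBetween x w, f A = ∑ A ∈ chainsIn (Icc v w) with w ∈ A, f A := by
  rw [← sum_biUnion]
  · refine sum_congr (ext fun A => ?_) fun _ _ => rfl
    simp only [mem_biUnion, mem_chainsBetween, mem_filter, mem_chainsIn]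
    constructor
    · rintro ⟨x, hx, hleast, hgreatest, hA⟩
      exact ⟨⟨fun y hy => mem_Icc.2 ⟨(mem_Icc.1 hx).1.trans (hleast.2 hy), hgreatest.2 hy⟩, hA⟩,
        hgreatest.1⟩
    · rintro ⟨⟨hsub, hA⟩, hw⟩
      obtain ⟨x, hx⟩ := exists_isLeast_of_isChain hA ⟨w, hw⟩
      exact ⟨x, hsub hx.1, hx, ⟨hw, fun y hy => (mem_Icc.1 (hsub hy)).2⟩, hA⟩
  · intro x _ y _ hxy
    refine disjoint_left.2 fun A hx hy => hxy ?_
    exact (mem_chainsBetween.1 hx).1.unique (mem_chainsBetween.1 hy).1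

variable (R : Type*) [Ring R]

theorem sum_chainsIn_Icc_neg_one_pow_card_of_lt {v w : α} (hvw : v < w) :
    ∑ A ∈ chainsIn (Icc v w) with w ∈ A, (-1 : R) ^ (#A + 1) = 0 := by
  -- Adding or removing the bottom element `v` is a sign-reversing involution.
  refine sum_involution (fun A _ => if v ∈ A then A.erase v else insert v A) ?_ ?_ ?_ ?_
  · intro A _
    split_ifs with hv
    · rw [← card_erase_add_one hv]
      simp [pow_succ]
    · rw [card_insert_of_notMem hv]
      simp [pow_succ]
  · intro A _ _
    split_ifs with hv
    · simpa using hv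
    · simpa using hv
  · intro A hA
    simp only [mem_filter, mem_chainsIn] at hA ⊢
    obtain ⟨⟨hsub, hchain⟩, hw⟩ := hA
    split_ifs with hv
    · exact ⟨⟨(erase_subset v A).trans hsub, hchain.mono (erase_subset v A)⟩,
        mem_erase.2 ⟨hvw.ne', hw⟩⟩
    · refine ⟨⟨insert_subset (left_mem_Icc.2 hvw.le) hsub, ?_⟩, mem_insert_of_mem hw⟩
      rw [coe_insert]
      exact hchain.insert fun x hx _ => Or.inl (mem_Icc.1 (hsub hx)).1
  · intro A _
    split_ifs with hv <;> simp_all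

theorem sum_chainsIn_Icc_neg_one_pow_card {v w : α} (hvw : v ≤ w) :
    ∑ A ∈ chainsIn (Icc v w) with w ∈ A, (-1 : R) ^ (#A + 1) = if v = w then 1 else 0 := by
  rcases hvw.eq_or_lt with rfl | hlt
  · have hsingleton : ({A ∈ chainsIn (Icc v v) | v ∈ A} : Finset (Finset α)) = {{v}} := by
      ext A
      simp only [mem_filter, mem_chainsIn, Icc_self, mem_singleton, subset_singleton_iff]
      constructor
      · grind
      · rintro rfl
        simp
    rw [hsingleton]
    simp
  · rw [sum_chainsIn_Icc_neg_one_pow_card_of_lt R hlt, if_neg hlt.ne]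

/-- Philip Hall's theorem. -/
theorem mu_eq_sum_chainsBetween (v w : α) :
    mu R v w = ∑ A ∈ chainsBetween v w, (-1 : R) ^ (#A + 1) := by
  classical
  let f : IncidenceAlgebra R α :=
    ⟨fun v w => ∑ A ∈ chainsBetween v w, (-1 : R) ^ (#A + 1), fun x y hxy =>
      sum_eq_zero fun A hA => by
        have h := mem_chainsBetween.1 hA
        exact (hxy (h.1.2 h.2.1.1)).elim⟩
  have hf : zeta R * f = 1 := by
    ext x y hxy
    rw [mul_apply, one_apply, ← sum_chainsIn_Icc_neg_one_pow_card R hxy,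
      ← sum_Icc_sum_chainsBetween]
    refine sum_congr rfl fun z hz => ?_
    rw [zeta_of_le (mem_Icc.1 hz).1, one_mul]
    rfl
  rw [left_inv_eq_right_inv (mu_mul_zeta R α) hf]
  rfl

theorem sum_cliques_eq_sum_mu [DecidableLE α] {V : Finset α} (hV : (V : Set α).OrdConnected)
    {r : α → α → Prop} [DecidableRel r] (hr : ∀ ⦃v x y w⦄, v ≤ x → y ≤ w → r v w → r x y) :
    ∑ A ∈ V.powerset with A.Nonempty ∧ ∀ x ∈ A, ∀ y ∈ A, x ≤ y ∧ r x y ∨ y ≤ x ∧ r y x,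
      (-1 : R) ^ (#A + 1) = ∑ w ∈ V, ∑ v ∈ V with v ≤ w ∧ r v w, mu R v w := by
  simp_rw [mu_eq_sum_chainsBetween, sum_sigma']
  symm
  refine sum_bij (fun p _ => p.2.2) ?_ ?_ ?_ fun _ _ => rfl
  · rintro ⟨w, v, A⟩ h
    simp only [mem_sigma, mem_filter, mem_powerset, mem_chainsBetween] at h ⊢
    obtain ⟨hw, ⟨hv, -, hvw⟩, hleast, hgreatest, hchain⟩ := h
    refine ⟨fun x hx => hV.out hv hw ⟨hleast.2 hx, hgreatest.2 hx⟩, ⟨v, hleast.1⟩, ?_⟩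
    exact fun x hx y hy => (hchain.total hx hy).imp
      (fun h => ⟨h, hr (hleast.2 hx) (hgreatest.2 hy) hvw⟩)
      fun h => ⟨h, hr (hleast.2 hy) (hgreatest.2 hx) hvw⟩
  · rintro ⟨w, v, A⟩ h ⟨w', v', A'⟩ h' rfl
    simp only [mem_sigma, mem_chainsBetween] at h h'
    obtain rfl := h.2.2.1.unique h'.2.2.1
    obtain rfl := h.2.2.2.1.unique h'.2.2.2.1
    rfl
  · intro A h
    simp only [mem_filter, mem_powerset] at h
    obtain ⟨hsub, hne, hA⟩ := h
    have hchain : IsChain (· ≤ ·) (A : Set α) :=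
      fun x hx y hy _ => (hA x hx y hy).imp And.left And.left
    obtain ⟨v, hv⟩ := exists_isLeast_of_isChain hchain hne
    obtain ⟨w, hw⟩ := exists_isGreatest_of_isChain hchain hne
    have hvw : r v w := by
      rcases hA v hv.1 w hw.1 with h | h
      · exact h.2
      · exact hr h.1 h.1 h.2
    refine ⟨⟨w, v, A⟩, ?_, rfl⟩
    simp only [mem_sigma, mem_filter, mem_chainsBetween]
    exact ⟨hsub hw.1, ⟨hsub hv.1, hv.2 hw.1, hvw⟩, hv, hw, hchain⟩

end MobiusFunction

section CycleGraphPowers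

open Finset IncidenceAlgebra

/-- The distance of `a, b < n` in the cycle graph on `n` vertices. -/
def cycDist (n a b : ℕ) : ℕ := min (Nat.dist a b) (n - Nat.dist a b)

/-- The cycle on `2 * k + m` vertices, cut open: two strands of the product order on `ℕ × ℕ`, the
diagonal and the points `(i + m, i)`. -/
abbrev TwoStrands (m : ℕ) : Type :=
  {p : ℕ × ℕ // p.1 = p.2 ∨ p.1 = p.2 + m}

namespace TwoStrands

/-- The point `(j, j)` of the diagonal strand. -/
def diag (m j : ℕ) : TwoStrands m := ⟨(j, j), Or.inl rfl⟩

/-- The point `(i + m, i)` of the other strand. -/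
def off (m i : ℕ) : TwoStrands m := ⟨(i + m, i), Or.inr rfl⟩

variable {m : ℕ}

theorem diag_inj {i j : ℕ} : diag m i = diag m j ↔ i = j := by
  simp [diag]

theorem off_ne_diag (hm : 0 < m) (i j : ℕ) : off m i ≠ diag m j := by
  simp only [off, diag, ne_eq, Subtype.mk.injEq, Prod.mk.injEq]
  lia

theorem eq_diag_or_off (v : TwoStrands m) : (∃ j, v = diag m j) ∨ ∃ i, v = off m i :=
  v.2.imp (fun h => ⟨v.1.2, Subtype.ext (Prod.ext h rfl)⟩)
    fun h => ⟨v.1.2, Subtype.ext (Prod.ext h rfl)⟩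

variable (R : Type*) [Ring R]

/-- The sum of `mu R v w` over the points `v ≤ w` of the diagonal strand from `(i, i)` on. -/
def diagSum (w : TwoStrands m) (i : ℕ) : R :=
  ∑ v ∈ Icc (diag m i) w with v.1.1 = v.1.2, mu R v w

/-- The sum of `mu R v w` over the points `v ≤ w` off the diagonal from `(i + m, i)` on. -/
def offSum (w : TwoStrands m) (i : ℕ) : R :=
  ∑ v ∈ Icc (off m i) w with v.1.1 ≠ v.1.2, mu R v w

theorem diagSum_add_offSum (w : TwoStrands m) (i : ℕ) :
    diagSum R w i + offSum R w i = if diag m i = w then 1 else 0 := by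
  rw [← sum_Icc_mu_left, ← sum_filter_add_sum_filter_not (Icc (diag m i) w) fun v => v.1.1 = v.1.2]
  congr 1
  refine sum_congr (ext fun v => ?_) fun _ _ => rfl
  obtain ⟨⟨a, b⟩, hv⟩ := v
  simp only [mem_filter, mem_Icc, diag, off, ← Subtype.coe_le_coe, Prod.mk_le_mk]
  lia

theorem diagSum_shift_add_offSum (w : TwoStrands m) (i : ℕ) :
    diagSum R w (i + m) + offSum R w i = if off m i = w then 1 else 0 := by
  rw [← sum_Icc_mu_left, ← sum_filter_add_sum_filter_not (Icc (off m i) w) fun v => v.1.1 = v.1.2]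
  congr 1
  refine sum_congr (ext fun v => ?_) fun _ _ => rfl
  obtain ⟨⟨a, b⟩, hv⟩ := v
  simp only [mem_filter, mem_Icc, diag, off, ← Subtype.coe_le_coe, Prod.mk_le_mk]
  lia

theorem diagSum_diag (hm : 0 < m) (j i : ℕ) :
    diagSum R (diag m j) i = if i ≤ j ∧ m ∣ j - i then 1 else 0 := by
  have hrec (i : ℕ) : diagSum R (diag m j) i =
      diagSum R (diag m j) (i + m) + if i = j then 1 else 0 := by
    have h := diagSum_add_offSum R (diag m j) i
    have h' := diagSum_shift_add_offSum R (diag m j) i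
    rw [if_neg (off_ne_diag hm i j)] at h'
    simp only [diag_inj] at h
    rw [← h, eq_neg_of_add_eq_zero_left h']
    abel
  have hzero (i : ℕ) (hi : j < i) : diagSum R (diag m j) i = 0 := by
    have : Icc (diag m i) (diag m j) = ∅ := Icc_eq_empty (by simpa [diag] using hi)
    rw [diagSum, this, filter_empty, sum_empty]
  induction h : j - i using Nat.strong_induction_on generalizing i with
  | _ d ih =>
    rcases lt_trichotomy i j with hij | rfl | hij
    · rw [hrec, if_neg hij.ne, add_zero, ih _ (by lia) (i + m) rfl]
      refine if_congr ?_ rfl rfl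
      rcases le_or_gt (i + m) j with hj | hj
      · have : d = j - (i + m) + m := by lia
        rw [this, Nat.dvd_add_self_right]
        lia
      · have : ¬ m ∣ d := Nat.not_dvd_of_pos_of_lt (by lia) (by lia)
        simp [this, hj.not_ge]
    · rw [hrec, hzero _ (by lia)]
      simp [← h]
    · rw [hzero i hij, if_neg (by lia)]

/-- The vertex `a` of the cycle: the first `k` vertices run along the off-diagonal strand and the
remaining `k + m` ones along the diagonal. -/
def ofVertex (m k a : ℕ) : TwoStrands m :=
  if a < k then off m a else diag m (a - k)

theorem ofVertex_injOn (hm : 0 < m) (k : ℕ) : Set.InjOn (ofVertex m k) (range (k + (k + m))) := by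
  intro a _ b _ h
  simp only [ofVertex, off, diag] at h
  split_ifs at h <;> simp only [Subtype.mk.injEq, Prod.mk.injEq] at h <;> lia

/-- The points of the two strands that represent the vertices of the cycle on `2 * k + m`
vertices. -/
def vertices (m k : ℕ) : Finset (TwoStrands m) :=
  (range (k + (k + m))).image (ofVertex m k)

theorem mem_vertices {k : ℕ} {v : TwoStrands m} : v ∈ vertices m k ↔ v.1.1 < k + m := by
  simp only [vertices, mem_image, mem_range]
  constructor
  · rintro ⟨a, ha, rfl⟩
    unfold ofVertex
    split_ifs <;> simp only [off, diag] <;> lia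
  · intro hv
    rcases eq_diag_or_off v with ⟨j, rfl⟩ | ⟨i, rfl⟩
    · exact ⟨k + j, Nat.add_lt_add_left hv k, by simp [ofVertex]⟩
    · have hi : i < k := Nat.lt_of_add_lt_add_right hv
      exact ⟨i, by lia, if_pos hi⟩

theorem ordConnected_vertices (m k : ℕ) : (vertices m k : Set (TwoStrands m)).OrdConnected :=
  ⟨fun _ _ _ hw _ hv => mem_vertices.2 ((hv.2.1).trans_lt (mem_vertices.1 hw))⟩

theorem sum_vertices {M : Type*} [AddCommMonoid M] (hm : 0 < m) (k : ℕ) (f : TwoStrands m → M) :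
    ∑ v ∈ vertices m k, f v =
      ∑ i ∈ range k, f (off m i) + ∑ j ∈ range (k + m), f (diag m j) := by
  rw [vertices, sum_image (ofVertex_injOn hm k), sum_range_add]
  congr 1
  · exact sum_congr rfl fun i hi => by rw [ofVertex, if_pos (mem_range.1 hi)]
  · exact sum_congr rfl fun j _ => by simp [ofVertex]

/-- For comparable points `v ≤ w`, the vertices that `v` and `w` represent are at distance at most
`k` in the cycle on `2 * k + m` vertices. -/
def Near (k : ℕ) (v w : TwoStrands m) : Prop := w.1.2 ≤ v.1.1 + k

instance (k : ℕ) (v w : TwoStrands m) : Decidable (Near k v w) :=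
  inferInstanceAs (Decidable (_ ≤ _))

theorem Near.anti {k : ℕ} {v x y w : TwoStrands m} (hvx : v ≤ x) (hyw : y ≤ w) (h : Near k v w) :
    Near k x y := by
  have := hvx.1
  have := hyw.2
  unfold Near at *
  lia

theorem sum_near_off (hm : 0 < m) {k j : ℕ} (hj : j < k) :
    ∑ v ∈ vertices m k with v ≤ off m j ∧ Near k v (off m j), mu R v (off m j) = 0 := by
  have hIcc : {v ∈ vertices m k | v ≤ off m j ∧ Near k v (off m j)} = Icc (diag m 0) (off m j) := by
    ext v
    simp only [mem_filter, mem_vertices, mem_Icc, Near, diag, off, ← Subtype.coe_le_coe,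
      Prod.le_def]
    lia
  rw [hIcc, sum_Icc_mu_left, if_neg (off_ne_diag hm j 0).symm]

theorem sum_near_diag (hm : 0 < m) {k j : ℕ} (hj : j < k + m) :
    ∑ v ∈ vertices m k with v ≤ diag m j ∧ Near k v (diag m j), mu R v (diag m j) =
      (if m ∣ min j k then 1 else 0) - if m ≤ j ∧ m ∣ j - m then 1 else 0 := by
  have hsplit : ∑ v ∈ vertices m k with v ≤ diag m j ∧ Near k v (diag m j), mu R v (diag m j) =
      diagSum R (diag m j) (j - k) + offSum R (diag m j) 0 := by
    rw [← sum_filter_add_sum_filter_not _ fun v => v.1.1 = v.1.2, diagSum, offSum]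
    congr 1 <;>
    · refine sum_congr (ext fun v => ?_) fun _ _ => rfl
      obtain ⟨⟨a, b⟩, hv⟩ := v
      simp only [mem_filter, mem_vertices, mem_Icc, Near, diag, off, ← Subtype.coe_le_coe,
        Prod.mk_le_mk]
      lia
  have hoff : offSum R (diag m j) 0 = -diagSum R (diag m j) m := by
    have h := diagSum_shift_add_offSum R (diag m j) 0
    rw [zero_add, if_neg (off_ne_diag hm 0 j)] at h
    exact eq_neg_of_add_eq_zero_right h
  have hmin : j - (j - k) = min j k := by lia
  rw [hsplit, hoff, diagSum_diag R hm, diagSum_diag R hm, hmin, sub_eq_add_neg]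
  simp

theorem sum_vertices_sum_near (hm : 0 < m) (k : ℕ) :
    ∑ w ∈ vertices m k, ∑ v ∈ vertices m k with v ≤ w ∧ Near k v w, mu R v w =
      if m ∣ k then (m : R) else 0 := by
  rw [sum_vertices hm, sum_eq_zero fun i hi => sum_near_off R hm (mem_range.1 hi), zero_add,
    sum_congr rfl fun j hj => sum_near_diag R hm (mem_range.1 hj), sum_sub_distrib,
    sum_range_add, add_comm k m, sum_range_add]
  have hlt : ∑ j ∈ range m, (if m ≤ j ∧ m ∣ j - m then 1 else 0 : R) = 0 :=
    sum_eq_zero fun j hj => if_neg fun h => (mem_range.1 hj).not_ge h.1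
  have hlow : ∑ j ∈ range k, (if m ∣ min j k then 1 else 0 : R) =
      ∑ j ∈ range k, if m ∣ j then 1 else 0 :=
    sum_congr rfl fun j hj => by rw [min_eq_left (mem_range.1 hj).le]
  rw [hlt, hlow]
  simp

theorem near_ofVertex_iff {k a b : ℕ} (hm : 0 < m) (ha : a < k + (k + m)) (hb : b < k + (k + m)) :
    (ofVertex m k a ≤ ofVertex m k b ∧ Near k (ofVertex m k a) (ofVertex m k b) ∨
      ofVertex m k b ≤ ofVertex m k a ∧ Near k (ofVertex m k b) (ofVertex m k a)) ↔
    cycDist (k + (k + m)) a b ≤ k := by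
  unfold ofVertex
  split_ifs <;>
    simp only [Near, off, diag, cycDist, Nat.dist, ← Subtype.coe_le_coe, Prod.mk_le_mk] <;> lia

end TwoStrands

theorem sum_image_powerset {β γ M : Type*} [DecidableEq γ] [AddCommMonoid M]
    {e : β → γ} {s : Finset β} (he : Set.InjOn e s) (f : Finset γ → M) :
    ∑ B ∈ (s.image e).powerset, f B = ∑ B ∈ s.powerset, f (B.image e) := by
  classical
  rw [powerset_image, sum_image fun A hA B hB h => ?_]
  rw [mem_coe, mem_powerset, ← coe_subset] at hA hB
  exact coe_injective ((he.image_eq_image_iff hA hB).1 (by exact_mod_cast h))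

/-- The Euler characteristic of the clique complex of the `k`-th power of the cycle graph on `n`
vertices. -/
theorem sum_cycDist_le (R : Type*) [Ring R] {n k : ℕ} (hk : 2 * k < n) :
    ∑ B ∈ (range n).powerset with B.Nonempty ∧ ∀ a ∈ B, ∀ b ∈ B, cycDist n a b ≤ k,
      (-1 : R) ^ (#B + 1) = if n - 2 * k ∣ k then ((n - 2 * k : ℕ) : R) else 0 := by
  classical
  obtain ⟨m, hm, rfl⟩ : ∃ m, 0 < m ∧ n = k + (k + m) := ⟨n - 2 * k, by lia, by lia⟩
  have hinj := TwoStrands.ofVertex_injOn hm k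
  have hsub : k + (k + m) - 2 * k = m := by lia
  rw [hsub, ← TwoStrands.sum_vertices_sum_near R hm k,
    ← sum_cliques_eq_sum_mu R (TwoStrands.ordConnected_vertices m k) fun _ _ _ _ => .anti,
    TwoStrands.vertices, sum_filter, sum_filter, sum_image_powerset hinj]
  refine sum_congr rfl fun B hB => ?_
  have hB' (a) (ha : a ∈ B) : a < k + (k + m) := mem_range.1 (mem_powerset.1 hB ha)
  rw [card_image_of_injOn (hinj.mono (mem_powerset.1 hB))]
  refine if_congr (and_congr image_nonempty.symm ?_) rfl rfl
  simp only [forall_mem_image]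
  exact forall₄_congr fun a ha b hb =>
    (TwoStrands.near_ofVertex_iff hm (hB' a ha) (hB' b hb)).symm

end CycleGraphPowers

section Distances

open Finset Real

theorem cycDist_comm (n a b : ℕ) : cycDist n a b = cycDist n b a := by
  rw [cycDist, cycDist, Nat.dist_comm]

theorem cycDist_le_half (n a b : ℕ) : cycDist n a b ≤ n / 2 := by
  unfold cycDist
  lia

/-- The Euclidean distance of two points of `C_n^eucl` at distance `j` in the cycle graph. -/
noncomputable def chord (n j : ℕ) : ℝ := 2 * sin (π * j / n)

@[simp]
theorem chord_zero (n : ℕ) : chord n 0 = 0 := by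
  simp [chord]

theorem chord_sub {n j : ℕ} (hn : 0 < n) (hj : j ≤ n) : chord n (n - j) = chord n j := by
  have hn' : (n : ℝ) ≠ 0 := by positivity
  rw [chord, chord, ← sin_pi_sub]
  congr 2
  push_cast [hj]
  field_simp
  ring

theorem chord_nonneg {n j : ℕ} (hj : j ≤ n) : 0 ≤ chord n j := by
  refine mul_nonneg zero_le_two (sin_nonneg_of_nonneg_of_le_pi (by positivity) ?_)
  exact div_le_of_le_mul₀ (by positivity) (by positivity) (by gcongr)

theorem chord_strictMonoOn (n : ℕ) : StrictMonoOn (chord n) (Set.Iic (n / 2)) := by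
  intro i _ j hj hij
  have hj : 2 * j ≤ n := by
    rw [Set.mem_Iic] at hj
    lia
  have hn : 0 < (n : ℝ) := by exact_mod_cast (by lia : 0 < n)
  have hj' : (2 * j : ℝ) ≤ n := by exact_mod_cast hj
  unfold chord
  gcongr
  refine sin_lt_sin_of_lt_of_le_pi_div_two ?_ ?_ (by gcongr)
  · linarith [pi_pos, show 0 ≤ π * i / n by positivity]
  · rw [div_le_iff₀ hn]
    nlinarith [pi_pos]

/-- The `k`-th point of `C_n^eucl`. -/
noncomputable def cyclePt (n k : ℕ) : ℂ :=
  Complex.exp (2 * (π : ℂ) * (k : ℂ) / (n : ℂ) * Complex.I)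

theorem euclCycle_eq_image_cyclePt (n : ℕ) : euclCycle n = (range n).image (cyclePt n) := by
  unfold euclCycle cyclePt
  congr

theorem norm_cyclePt (n k : ℕ) : ‖cyclePt n k‖ = 1 := by
  simpa [cyclePt] using Complex.norm_exp_ofReal_mul_I (2 * π * k / n)

theorem cyclePt_add (n a j : ℕ) :
    cyclePt n (a + j) = cyclePt n a * Complex.exp (Complex.I * ((2 * (π * j / n) : ℝ) : ℂ)) := by
  rw [cyclePt, cyclePt, ← Complex.exp_add]
  congr 1
  push_cast
  ring

theorem dist_cyclePt_add {n a j : ℕ} (hj : j ≤ n) :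
    dist (cyclePt n a) (cyclePt n (a + j)) = chord n j := by
  rw [dist_comm, dist_eq_norm, cyclePt_add, ← mul_sub_one, norm_mul, norm_cyclePt, one_mul,
    Complex.norm_exp_I_mul_ofReal_sub_one, mul_div_cancel_left₀ _ two_ne_zero, ← chord,
    norm_of_nonneg (chord_nonneg hj)]

theorem dist_cyclePt {n a b : ℕ} (ha : a < n) (hb : b < n) :
    dist (cyclePt n a) (cyclePt n b) = chord n (cycDist n a b) := by
  wlog hab : a ≤ b generalizing a b
  · rw [dist_comm, cycDist_comm, this hb ha (le_of_not_ge hab)]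
  obtain ⟨j, rfl⟩ := Nat.exists_eq_add_of_le hab
  have hj : j ≤ n := by lia
  rw [dist_cyclePt_add hj, cycDist, Nat.dist_eq_sub_of_le hab, Nat.add_sub_cancel_left]
  rcases min_choice j (n - j) with h | h <;> rw [h]
  rw [chord_sub (by lia) hj]

theorem cyclePt_injOn (n : ℕ) : Set.InjOn (cyclePt n) (range n) := by
  intro a ha b hb h
  simp only [coe_range, Set.mem_Iio] at ha hb
  have hchord : chord n (cycDist n a b) = chord n 0 := by
    rw [← dist_cyclePt ha hb, h, dist_self, chord_zero]
  have hzero : cycDist n a b = 0 :=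
    (chord_strictMonoOn n).injOn (cycDist_le_half n a b) (Nat.zero_le _) hchord
  unfold cycDist Nat.dist at hzero
  lia

/-- The diameter of a set `B` of vertices in the cycle graph on `n` vertices. -/
def cycDiam (n : ℕ) (B : Finset ℕ) : ℕ := B.sup fun a => B.sup fun b => cycDist n a b

theorem cycDiam_le_iff {n k : ℕ} {B : Finset ℕ} :
    cycDiam n B ≤ k ↔ ∀ a ∈ B, ∀ b ∈ B, cycDist n a b ≤ k := by
  simp only [cycDiam, Finset.sup_le_iff]

theorem cycDiam_le_half (n : ℕ) (B : Finset ℕ) : cycDiam n B ≤ n / 2 :=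
  cycDiam_le_iff.2 fun a _ b _ => cycDist_le_half n a b

theorem exists_cycDist_eq_cycDiam (n : ℕ) {B : Finset ℕ} (hB : B.Nonempty) :
    ∃ a ∈ B, ∃ b ∈ B, cycDist n a b = cycDiam n B := by
  obtain ⟨a, ha, hae⟩ := exists_mem_eq_sup B hB fun a => B.sup fun b => cycDist n a b
  obtain ⟨b, hb, hbe⟩ := exists_mem_eq_sup B hB fun b => cycDist n a b
  exact ⟨a, ha, b, hb, by rw [cycDiam, hae, hbe]⟩

theorem diam_image_cyclePt {n : ℕ} {B : Finset ℕ} (hB : B ⊆ range n) (hne : B.Nonempty) :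
    Metric.diam (B.image (cyclePt n) : Set ℂ) = chord n (cycDiam n B) := by
  have hlt (a) (ha : a ∈ B) : a < n := mem_range.1 (hB ha)
  rw [coe_image]
  apply le_antisymm
  · refine Metric.diam_le_of_forall_dist_le
      (chord_nonneg ((cycDiam_le_half n B).trans (Nat.div_le_self n 2))) ?_
    rintro _ ⟨a, ha, rfl⟩ _ ⟨b, hb, rfl⟩
    rw [dist_cyclePt (hlt a ha) (hlt b hb)]
    exact (chord_strictMonoOn n).monotoneOn (cycDist_le_half n a b) (cycDiam_le_half n B)
      (cycDiam_le_iff.1 le_rfl a ha b hb)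
  · obtain ⟨a, ha, b, hb, hab⟩ := exists_cycDist_eq_cycDiam n hne
    rw [← hab, ← dist_cyclePt (hlt a ha) (hlt b hb)]
    exact Metric.dist_le_diam_of_mem (B.finite_toSet.image _).isBounded
      (Set.mem_image_of_mem _ ha) (Set.mem_image_of_mem _ hb)

end Distances

section ClosedFormula

open Finset Real

theorem sum_mul_comp_eq_sum_range {ι R : Type*} [Ring R] (s : Finset ι) (c : ι → R) (F : ℕ → R)
    {g : ι → ℕ} {K : ℕ} (hg : ∀ b ∈ s, g b ≤ K) :
    ∑ b ∈ s, c b * F (g b) = (∑ b ∈ s, c b) * F K +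
      ∑ k ∈ range K, (∑ b ∈ s with g b ≤ k, c b) * (F k - F (k + 1)) := by
  have htelescope (b) (hb : b ∈ s) :
      F (g b) = F K + ∑ k ∈ range K, if g b ≤ k then F k - F (k + 1) else 0 := by
    have hIco : {k ∈ range K | g b ≤ k} = Ico (g b) K := by
      ext
      simp [and_comm]
    rw [← sum_filter, hIco, sum_Ico_eq_sub _ (hg b hb), sum_range_sub', sum_range_sub']
    abel
  simp_rw [sum_mul, sum_filter]
  rw [sum_comm, ← sum_add_distrib]
  refine sum_congr rfl fun b hb => ?_
  rw [htelescope b hb, mul_add, mul_sum]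
  simp only [mul_ite, mul_zero]

theorem sum_powerset_nonempty_neg_one_pow_card {ι : Type*} (R : Type*) [Ring R] {s : Finset ι}
    (hs : s.Nonempty) : ∑ B ∈ s.powerset with B.Nonempty, (-1 : R) ^ (#B + 1) = 1 := by
  classical
  have h : ∑ B ∈ s.powerset, (-1 : R) ^ #B = 0 := by
    exact_mod_cast congrArg (Int.cast : ℤ → R) (sum_powerset_neg_one_pow_card_of_nonempty hs)
  have hempty : {B ∈ s.powerset | ¬ B.Nonempty} = {∅} := by
    ext B
    simp +contextual [not_nonempty_iff_eq_empty]
  rw [← sum_filter_add_sum_filter_not _ fun B => B.Nonempty, hempty, sum_singleton, card_empty,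
    pow_zero] at h
  simp only [pow_succ, mul_neg_one, sum_neg_distrib]
  exact (eq_neg_of_add_eq_zero_right h).symm

theorem ripsMag_euclCycle_eq_sum_powerset (n : ℕ) (t : ℝ) :
    ripsMag (euclCycle n) t = ∑ B ∈ (range n).powerset with B.Nonempty,
      (-1 : ℝ) ^ (#B + 1) * exp (-chord n (cycDiam n B) * t) := by
  rw [ripsMag, sum_filter, sum_filter, euclCycle_eq_image_cyclePt,
    sum_image_powerset (cyclePt_injOn n)]
  refine sum_congr rfl fun B hB => ?_
  have hB' : B ⊆ range n := mem_powerset.1 hB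
  rcases B.eq_empty_or_nonempty with rfl | hne
  · simp
  rw [if_pos hne, if_pos (hne.image _), diam_image_cyclePt hB' hne,
    card_image_of_injOn ((cyclePt_injOn n).mono hB')]
  have hcard : #B + 1 = #B - 1 + 2 := by
    have := hne.card_pos
    lia
  rw [hcard, pow_add, neg_one_sq, mul_one]

theorem ripsMag_euclCycle {n : ℕ} (hn : 0 < n) (t : ℝ) :
    ripsMag (euclCycle n) t = exp (-chord n (n / 2) * t) +
      ∑ k ∈ range (n / 2) with n - 2 * k ∣ k, ((n - 2 * k : ℕ) : ℝ) *
        (exp (-chord n k * t) - exp (-chord n (k + 1) * t)) := by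
  rw [ripsMag_euclCycle_eq_sum_powerset,
    sum_mul_comp_eq_sum_range _ _ (fun k => exp (-chord n k * t)) fun B _ => cycDiam_le_half n B,
    sum_powerset_nonempty_neg_one_pow_card ℝ (nonempty_range_iff.2 hn.ne'), one_mul, sum_filter]
  congr 1
  refine sum_congr rfl fun k hk => ?_
  have hk' : 2 * k < n := by
    rw [mem_range] at hk
    lia
  simp only [filter_filter, cycDiam_le_iff]
  rw [sum_cycDist_le ℝ hk', ite_mul, zero_mul]

end ClosedFormula

section OddDivisors

open Finset Real

theorem mem_properDivisors_filter_odd {n r : ℕ} :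
    r ∈ {r ∈ n.properDivisors | Odd r} ↔
      ∃ d l, 2 ≤ d ∧ n = d * (2 * l + 1) ∧ r = 2 * l + 1 := by
  simp only [mem_filter, Nat.mem_properDivisors]
  constructor
  · rintro ⟨⟨⟨d, rfl⟩, hlt⟩, l, rfl⟩
    have hd : 1 < d := by nlinarith
    exact ⟨d, l, hd, mul_comm _ _, rfl⟩
  · rintro ⟨d, l, hd, rfl, rfl⟩
    exact ⟨⟨dvd_mul_left _ _, by nlinarith⟩, l, rfl⟩

theorem mem_range_half_filter_dvd {n k : ℕ} :
    k ∈ {k ∈ range (n / 2) | n - 2 * k ∣ k} ↔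
      ∃ d l, 2 ≤ d ∧ n = d * (2 * l + 1) ∧ k = d * l := by
  simp only [mem_filter, mem_range]
  constructor
  · rintro ⟨hk, l, hl⟩
    have hn : n = (n - 2 * k) * (2 * l + 1) := by
      rw [mul_add_one, mul_left_comm, ← hl]
      lia
    exact ⟨n - 2 * k, l, by lia, hn, hl⟩
  · rintro ⟨d, l, hd, rfl, rfl⟩
    have hn : d * (2 * l + 1) = 2 * (d * l) + d := by ring
    rw [hn, Nat.add_sub_cancel_left]
    exact ⟨by lia, dvd_mul_right d l⟩

/-- The contribution of an odd divisor `r < n` of `n` to the Rips magnitude of `C_n^eucl`. -/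
noncomputable def cycleTerm (t : ℝ) (n r : ℕ) : ℝ :=
  (n / r : ℝ) *
    (exp (-2 * t * cos (π / (2 * r))) - exp (-2 * t * cos (π / (2 * r) - π / n)))

theorem chord_mul {d : ℕ} (hd : 0 < d) (l : ℕ) :
    chord (d * (2 * l + 1)) (d * l) = 2 * cos (π / (2 * (2 * l + 1 : ℕ))) := by
  rw [chord, ← sin_pi_div_two_sub]
  congr 2
  push_cast
  field_simp
  ring

theorem chord_mul_add_one {d : ℕ} (hd : 0 < d) (l : ℕ) :
    chord (d * (2 * l + 1)) (d * l + 1) =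
      2 * cos (π / (2 * (2 * l + 1 : ℕ)) - π / (d * (2 * l + 1) : ℕ)) := by
  rw [chord, ← sin_pi_div_two_sub]
  congr 2
  push_cast
  field_simp
  ring

theorem mul_exp_chord_sub_exp_chord {d : ℕ} (hd : 0 < d) (l : ℕ) (t : ℝ) :
    d * (exp (-chord (d * (2 * l + 1)) (d * l) * t) -
      exp (-chord (d * (2 * l + 1)) (d * l + 1) * t)) =
    cycleTerm t (d * (2 * l + 1)) (2 * l + 1) := by
  have hdiv : (((d * (2 * l + 1) : ℕ) : ℝ) / (2 * l + 1 : ℕ)) = d := by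
    push_cast
    field_simp
  rw [chord_mul hd, chord_mul_add_one hd, cycleTerm, hdiv]
  ring_nf

theorem ripsMag_euclCycle_eq_sum_cycleTerm {n : ℕ} (hn : 0 < n) (t : ℝ) :
    ripsMag (euclCycle n) t = exp (-chord n (n / 2) * t) +
      ∑ r ∈ n.properDivisors with Odd r, cycleTerm t n r := by
  rw [ripsMag_euclCycle hn]
  congr 1
  symm
  -- `n = d * (2 * l + 1)` matches the divisor `r = 2 * l + 1` with the step `k = d * l`.
  have hstep {d : ℕ} (l : ℕ) : d * (2 * l + 1) / (2 * l + 1) * ((2 * l + 1) / 2) = d * l := by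
    rw [Nat.mul_div_cancel _ (by lia), show (2 * l + 1) / 2 = l by lia]
  have hsub (d l : ℕ) : d * (2 * l + 1) - 2 * (d * l) = d := by
    rw [show d * (2 * l + 1) = 2 * (d * l) + d by ring, Nat.add_sub_cancel_left]
  refine sum_bij (fun r _ => n / r * (r / 2)) ?_ ?_ ?_ ?_
  · intro r hr
    obtain ⟨d, l, hd, rfl, rfl⟩ := mem_properDivisors_filter_odd.1 hr
    exact mem_range_half_filter_dvd.2 ⟨d, l, hd, rfl, hstep l⟩
  · intro r hr r' hr' h
    obtain ⟨d, l, hd, rfl, rfl⟩ := mem_properDivisors_filter_odd.1 hr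
    obtain ⟨d', l', hd', hn', rfl⟩ := mem_properDivisors_filter_odd.1 hr'
    rw [hstep, hn', hstep] at h
    obtain rfl : d = d' := by rw [← hsub d l, ← hsub d' l', ← hn', h]
    exact Nat.eq_of_mul_eq_mul_left (by lia) hn'
  · intro k hk
    obtain ⟨d, l, hd, rfl, rfl⟩ := mem_range_half_filter_dvd.1 hk
    exact ⟨2 * l + 1, mem_properDivisors_filter_odd.2 ⟨d, l, hd, rfl, rfl⟩, hstep l⟩
  · intro r hr
    obtain ⟨d, l, hd, rfl, rfl⟩ := mem_properDivisors_filter_odd.1 hr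
    rw [hstep, hsub, mul_exp_chord_sub_exp_chord (by lia)]

end OddDivisors

section Asymptotics

open Filter Real Topology

theorem exp_neg_sub_exp_neg_le {x y : ℝ} (hx : 0 ≤ x) (hxy : x ≤ y) :
    exp (-x) - exp (-y) ≤ y - x := by
  have hmul : exp (-y) = exp (-x) * exp (-(y - x)) := by
    rw [← exp_add]
    ring_nf
  calc exp (-x) - exp (-y) = exp (-x) * (1 - exp (-(y - x))) := by rw [hmul]; ring
    _ ≤ exp (-x) * (y - x) :=
      mul_le_mul_of_nonneg_left (by linarith [one_sub_le_exp_neg (y - x)]) (exp_pos _).le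
    _ ≤ y - x :=
      mul_le_of_le_one_left (sub_nonneg.2 hxy) (exp_le_one_iff.2 (neg_nonpos.2 hx))

theorem cos_sub_sub_cos (a h : ℝ) : cos (a - h) - cos a = 2 * sin (a - h / 2) * sin (h / 2) := by
  rw [cos_sub_cos, show (a - h + a) / 2 = a - h / 2 by ring,
    show (a - h - a) / 2 = -(h / 2) by ring, sin_neg]
  ring

theorem cos_le_cos_sub {a h : ℝ} (hh : 0 ≤ h) (hha : h ≤ 2 * a) (ha : a ≤ π) :
    cos a ≤ cos (a - h) := by
  have hsin_mid : 0 ≤ sin (a - h / 2) := sin_nonneg_of_nonneg_of_le_pi (by linarith) (by linarith)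
  have hsin_half : 0 ≤ sin (h / 2) := sin_nonneg_of_nonneg_of_le_pi (by linarith) (by linarith)
  rw [← sub_nonneg, cos_sub_sub_cos]
  positivity

theorem cos_sub_sub_cos_le {a h : ℝ} (hh : 0 ≤ h) (hha : h ≤ 2 * a) (ha : a ≤ π) :
    cos (a - h) - cos a ≤ a * h := by
  have hsin_half : 0 ≤ sin (h / 2) := sin_nonneg_of_nonneg_of_le_pi (by linarith) (by linarith)
  calc cos (a - h) - cos a = 2 * sin (a - h / 2) * sin (h / 2) := cos_sub_sub_cos a h
    _ ≤ 2 * a * (h / 2) := by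
      gcongr
      · linarith
      · exact (sin_le (by linarith)).trans (by linarith)
      · exact sin_le (by linarith)
    _ = a * h := by ring

theorem pi_div_two_mul_le {r : ℕ} (hr : 0 < r) : π / (2 * r) ≤ π / 2 := by
  have : (1 : ℝ) ≤ r := by exact_mod_cast hr
  gcongr
  linarith

theorem pi_div_two_mul_le_pi {r : ℕ} (hr : 0 < r) : π / (2 * r) ≤ π :=
  (pi_div_two_mul_le hr).trans (half_le_self pi_pos.le)

theorem cos_pi_div_two_mul_nonneg {r : ℕ} (hr : 0 < r) : 0 ≤ cos (π / (2 * r)) :=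
  cos_nonneg_of_neg_pi_div_two_le_of_le
    (by linarith [pi_pos, show 0 ≤ π / (2 * r) by positivity]) (pi_div_two_mul_le hr)

theorem pi_div_le_two_mul {n r : ℕ} (hr : 0 < r) (hrn : r ≤ n) : π / n ≤ 2 * (π / (2 * r)) := by
  have hr' : 2 * (π / (2 * r)) = π / r := by field_simp
  rw [hr']
  gcongr

theorem cycleTerm_nonneg {t : ℝ} (ht : 0 ≤ t) {n r : ℕ} (hr : 0 < r) (hrn : r ≤ n) :
    0 ≤ cycleTerm t n r := by
  have hcos : cos (π / (2 * r)) ≤ cos (π / (2 * r) - π / n) :=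
    cos_le_cos_sub (by positivity) (pi_div_le_two_mul hr hrn)
      (pi_div_two_mul_le_pi hr)
  refine mul_nonneg (by positivity) (sub_nonneg.2 (exp_le_exp.2 ?_))
  exact mul_le_mul_of_nonpos_left hcos (by linarith)

theorem cycleTerm_le {t : ℝ} (ht : 0 ≤ t) {n r : ℕ} (hr : 0 < r) (hrn : r ≤ n) :
    cycleTerm t n r ≤ t * π ^ 2 * (1 / r ^ 2 : ℝ) := by
  have hn : 0 < n := hr.trans_le hrn
  have hha := pi_div_le_two_mul hr hrn
  have ha : π / (2 * r) ≤ π := pi_div_two_mul_le_pi hr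
  have hcos := cos_le_cos_sub (by positivity) hha ha
  calc cycleTerm t n r
      = n / r * (exp (-(2 * t * cos (π / (2 * r)))) -
          exp (-(2 * t * cos (π / (2 * r) - π / n)))) := by
        simp only [cycleTerm, neg_mul]
    _ ≤ n / r * (2 * t * (cos (π / (2 * r) - π / n) - cos (π / (2 * r)))) := by
        gcongr
        rw [mul_sub]
        exact exp_neg_sub_exp_neg_le
          (mul_nonneg (by positivity) (cos_pi_div_two_mul_nonneg hr)) (by gcongr)
    _ ≤ n / r * (2 * t * (π / (2 * r) * (π / n))) := by
        gcongr
        exact cos_sub_sub_cos_le (by positivity) hha ha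
    _ = t * π ^ 2 * (1 / r ^ 2) := by field_simp

theorem tendsto_cycleTerm (t : ℝ) (r : ℕ) :
    Tendsto (fun n => cycleTerm t n r) atTop (𝓝 (2 * π * t * euclSeriesTerm t r)) := by
  set a : ℝ := π / (2 * r) with ha
  have hderiv : HasDerivAt (fun h : ℝ => exp (-2 * t * cos (a - h)))
      (exp (-2 * t * cos a) * (-2 * t * sin a)) 0 := by
    have hsub : HasDerivAt (fun h : ℝ => a - h) (-1) 0 := by
      simpa using (hasDerivAt_id (0 : ℝ)).const_sub a
    convert ((hsub.cos).const_mul (-2 * t)).exp using 1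
    simp
  have hstep : Tendsto (fun n : ℕ => π / (n : ℝ)) atTop (𝓝[≠] 0) := by
    refine tendsto_nhdsWithin_iff.2 ⟨tendsto_const_div_atTop_nhds_zero_nat π, ?_⟩
    filter_upwards [eventually_gt_atTop 0] with n hn
    exact (by positivity : π / (n : ℝ) ≠ 0)
  have hslope := (hderiv.tendsto_slope_zero.comp hstep).const_mul (-π / r)
  have hlim : -π / r * (exp (-2 * t * cos a) * (-2 * t * sin a)) =
      2 * π * t * euclSeriesTerm t r := by
    unfold euclSeriesTerm
    ring
  rw [← hlim]
  refine hslope.congr' ?_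
  filter_upwards [eventually_gt_atTop 0] with n hn
  simp only [Function.comp_apply, zero_add, sub_zero, smul_eq_mul, cycleTerm, ← ha]
  field_simp
  ring

theorem tendsto_exp_chord_half (t : ℝ) :
    Tendsto (fun n : ℕ => exp (-chord n (n / 2) * t)) atTop (𝓝 (exp (-2 * t))) := by
  have hhalf : Tendsto (fun n : ℕ => ((n / 2 : ℕ) : ℝ) / n) atTop (𝓝 (1 / 2)) := by
    have h := (tendsto_nat_floor_mul_div_atTop (R := ℝ) (a := 1 / 2) (by norm_num)).comp
      tendsto_natCast_atTop_atTop
    refine h.congr fun n => ?_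
    rw [Function.comp_apply, one_div_mul_eq_div, ← Nat.cast_ofNat (R := ℝ) (n := 2),
      Nat.floor_div_eq_div]
  have hcont : Continuous fun x : ℝ => exp (-(2 * sin (π * x)) * t) := by fun_prop
  have hlim := (hcont.tendsto (1 / 2)).comp hhalf
  rw [mul_one_div, sin_pi_div_two, mul_one] at hlim
  simpa only [Function.comp_def, chord, mul_div_assoc] using hlim

theorem euclSeriesTerm_nonneg (t : ℝ) (r : ℕ) : 0 ≤ euclSeriesTerm t r := by
  have hsin : 0 ≤ sin (π / (2 * r)) := by
    rcases r.eq_zero_or_pos with rfl | hr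
    · simp
    · exact sin_nonneg_of_nonneg_of_le_pi (by positivity) (pi_div_two_mul_le_pi hr)
  unfold euclSeriesTerm
  positivity

theorem euclSeriesTerm_le {t : ℝ} (ht : 0 ≤ t) {r : ℕ} (hr : 0 < r) :
    euclSeriesTerm t r ≤ π / (2 * (r : ℝ) ^ 2) := by
  have hexp : exp (-2 * t * cos (π / (2 * r))) ≤ 1 := by
    refine exp_le_one_iff.2 ?_
    nlinarith [cos_pi_div_two_mul_nonneg hr]
  calc euclSeriesTerm t r ≤ 1 / r * 1 * (π / (2 * r)) := by
        unfold euclSeriesTerm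
        gcongr
        · exact sin_nonneg_of_nonneg_of_le_pi (by positivity) (pi_div_two_mul_le_pi hr)
        · exact sin_le (by positivity)
    _ = π / (2 * r ^ 2) := by field_simp

theorem summable_abs_euclSeriesTerm {t : ℝ} (ht : 0 ≤ t) :
    Summable fun r : ℕ => if Odd r then |euclSeriesTerm t r| else 0 := by
  refine .of_nonneg_of_le (fun r => by positivity) (fun r => ?_)
    ((summable_one_div_nat_pow.2 one_lt_two).mul_left (π / 2))
  split_ifs with hr
  · rw [abs_of_nonneg (euclSeriesTerm_nonneg t r), mul_one_div, div_div]
    exact euclSeriesTerm_le ht hr.pos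
  · positivity

theorem tendsto_sum_of_dominated_convergence {ι β E : Type*} [NormedAddCommGroup E]
    [CompleteSpace E] {l : Filter ι} {D : ι → Finset β} {p : β → Prop} [DecidablePred p]
    {f : ι → β → E} {g : β → E} {bound : β → ℝ} (hbound : Summable bound)
    (hbound_nonneg : ∀ r, 0 ≤ bound r) (hD : ∀ i, ∀ r ∈ D i, p r)
    (hD' : ∀ r, p r → ∀ᶠ i in l, r ∈ D i)
    (hfg : ∀ r, p r → Tendsto (f · r) l (𝓝 (g r)))
    (hf : ∀ i, ∀ r ∈ D i, ‖f i r‖ ≤ bound r) :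
    Tendsto (fun i => ∑ r ∈ D i, f i r) l (𝓝 (∑' r, if p r then g r else 0)) := by
  classical
  have hsum (i : ι) : ∑ r ∈ D i, f i r = ∑' r, if r ∈ D i then f i r else 0 := by
    rw [tsum_eq_sum (s := D i) fun r hr => if_neg hr]
    exact Finset.sum_congr rfl fun r hr => (if_pos hr).symm
  simp_rw [hsum]
  refine tendsto_tsum_of_dominated_convergence hbound (fun r => ?_) (.of_forall fun i r => ?_)
  · by_cases hr : p r
    · rw [if_pos hr]
      refine (hfg r hr).congr' ?_
      filter_upwards [hD' r hr] with i hi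
      rw [if_pos hi]
    · have hr' (i : ι) : r ∉ D i := fun h => hr (hD i r h)
      simp only [hr, hr', if_false, tendsto_const_nhds]
  · split_ifs with hr
    · exact hf i r hr
    · simpa using hbound_nonneg r

theorem tendsto_sum_cycleTerm {t : ℝ} (ht : 0 ≤ t) {ι : Type*} {l : Filter ι} {ν : ι → ℕ}
    (hν : Tendsto ν l atTop) {D : ι → Finset ℕ} (hD : ∀ i, ∀ r ∈ D i, Odd r ∧ r ≤ ν i)
    (hD' : ∀ r, Odd r → ∀ᶠ i in l, r ∈ D i) :
    Tendsto (fun i => ∑ r ∈ D i, cycleTerm t (ν i) r) l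
      (𝓝 (2 * π * t * ∑' r : ℕ, if Odd r then euclSeriesTerm t r else 0)) := by
  simp only [← tsum_mul_left, mul_ite, mul_zero]
  refine tendsto_sum_of_dominated_convergence
    ((summable_one_div_nat_pow.2 one_lt_two).mul_left (t * π ^ 2)) (fun r => by positivity)
    (fun i r hr => (hD i r hr).1) hD' (fun r _ => (tendsto_cycleTerm t r).comp hν)
    fun i r hr => ?_
  obtain ⟨hodd, hle⟩ := hD i r hr
  rw [norm_of_nonneg (cycleTerm_nonneg ht hodd.pos hle)]
  exact cycleTerm_le ht hodd.pos hle

theorem limsup_eq_of_le_of_tendsto_comp {α β γ : Type*} [ConditionallyCompleteLinearOrder γ]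
    [TopologicalSpace γ] [OrderTopology γ] {f : Filter α} {g : Filter β} [f.NeBot] [g.NeBot]
    {u U : α → γ} {φ : β → α} {L : γ} (hle : u ≤ᶠ[f] U) (hU : Tendsto U f (𝓝 L))
    (hφ : Tendsto φ g f) (hu : Tendsto (u ∘ φ) g (𝓝 L)) : limsup u f = L := by
  have hcobdd : (map φ g).IsCoboundedUnder (· ≤ ·) u := by
    rw [IsCoboundedUnder, map_map]
    exact hu.isCoboundedUnder_le
  apply le_antisymm
  · rw [← hU.limsup_eq]
    exact limsup_le_limsup hle (hcobdd.mono (map_mono hφ)) hU.isBoundedUnder_le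
  · calc L = limsup u (map φ g) := hu.limsup_eq.symm
      _ ≤ limsup u f := limsup_le_limsup_of_le hφ hcobdd (hU.isBoundedUnder_le.mono_le hle)

end Asymptotics

section Limsup

open Filter Real Topology

/-- A sequence converging to the upper limit in the theorem that dominates
`n ↦ ripsMag (euclCycle n) t`: every odd `r < n` is counted as if it divided `n`. -/
noncomputable def oddMajorant (t : ℝ) (n : ℕ) : ℝ :=
  exp (-chord n (n / 2) * t) + ∑ r ∈ Finset.range n with Odd r, cycleTerm t n r

theorem ripsMag_euclCycle_le_oddMajorant {t : ℝ} (ht : 0 ≤ t) {n : ℕ} (hn : 0 < n) :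
    ripsMag (euclCycle n) t ≤ oddMajorant t n := by
  rw [ripsMag_euclCycle_eq_sum_cycleTerm hn, oddMajorant]
  gcongr exp _ + ?_
  refine Finset.sum_le_sum_of_subset_of_nonneg ?_ fun r hr _ => ?_
  · refine Finset.filter_subset_filter _ fun r hr => ?_
    exact Finset.mem_range.2 (Nat.mem_properDivisors.1 hr).2
  · rw [Finset.mem_filter, Finset.mem_range] at hr
    exact cycleTerm_nonneg ht hr.2.pos hr.1.le

theorem tendsto_oddMajorant {t : ℝ} (ht : 0 ≤ t) :
    Tendsto (oddMajorant t) atTop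
      (𝓝 (exp (-2 * t) + 2 * π * t * ∑' r : ℕ, if Odd r then euclSeriesTerm t r else 0)) := by
  refine (tendsto_exp_chord_half t).add (tendsto_sum_cycleTerm ht tendsto_id ?_ ?_)
  · intro n r hr
    rw [Finset.mem_filter, Finset.mem_range] at hr
    exact ⟨hr.2, hr.1.le⟩
  · intro r hr
    filter_upwards [eventually_gt_atTop r] with n hn
    exact Finset.mem_filter.2 ⟨Finset.mem_range.2 hn, hr⟩

theorem tendsto_ripsMag_euclCycle_factorial {t : ℝ} (ht : 0 ≤ t) :
    Tendsto (fun i : ℕ => ripsMag (euclCycle i.factorial) t) atTop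
      (𝓝 (exp (-2 * t) + 2 * π * t * ∑' r : ℕ, if Odd r then euclSeriesTerm t r else 0)) := by
  simp only [ripsMag_euclCycle_eq_sum_cycleTerm (Nat.factorial_pos _)]
  refine ((tendsto_exp_chord_half t).comp factorial_tendsto_atTop).add
    (tendsto_sum_cycleTerm ht factorial_tendsto_atTop ?_ ?_)
  · intro i r hr
    rw [Finset.mem_filter, Nat.mem_properDivisors] at hr
    exact ⟨hr.2, hr.1.2.le⟩
  · intro r hr
    filter_upwards [eventually_gt_atTop r] with i hi
    exact Finset.mem_filter.2 ⟨Nat.mem_properDivisors.2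
      ⟨Nat.dvd_factorial hr.pos hi.le, hi.trans_le i.self_le_factorial⟩, hr⟩

end Limsup

/-- for every `t > 0`, the series `Σ_{r odd} (1/r) e^{−2t cos(π/(2r))} sin(π/(2r))`
converges absolutely (with `r`-th term bounded by `π/(2r²)`), and
`limsup_{n→∞} |tC_n^eucl|_Rips = e^{−2t} + 2πt Σ_{r odd} (1/r) e^{−2t cos(π/(2r))} sin(π/(2r))`. -/
theorem ripsMag_euclCycle_limsup (t : ℝ) (ht : 0 < t) :
    Summable (fun r : ℕ => if Odd r then |euclSeriesTerm t r| else 0) ∧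
    (∀ r : ℕ, Odd r → euclSeriesTerm t r ≤ π / (2 * (r : ℝ) ^ 2)) ∧
    Filter.limsup (fun n : ℕ => ripsMag (euclCycle n) t) Filter.atTop =
      Real.exp (-2 * t) + 2 * π * t *
        ∑' r : ℕ, (if Odd r then euclSeriesTerm t r else 0) := by
  refine ⟨summable_abs_euclSeriesTerm ht.le, fun r hr => euclSeriesTerm_le ht.le hr.pos, ?_⟩
  refine limsup_eq_of_le_of_tendsto_comp ?_ (tendsto_oddMajorant ht.le) factorial_tendsto_atTop
    (tendsto_ripsMag_euclCycle_factorial ht.le)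
  filter_upwards [Filter.eventually_gt_atTop 0] with n hn
  exact ripsMag_euclCycle_le_oddMajorant ht.le hn
end
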